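/- (BDG inequalities for simple quadratic variation.) Assume Assumption A. Let X be a martingale and τ = (τ_n) a proper sequence of stopping times. For any p ≥ 1 there exist finite positive constants c_p and C_p such that c_p · Ē(([X]^τ)^{p/2}) ≤ Ē(((X−X_0)^{τ,*})^p) ≤ C_p · Ē(([X]^τ)^{p/2}). For p > 1 one may take C_p = 6^p (p−1)^{p−1} and c_p = 1/C_p; for p = 1 one may take C_1 = 6 and c_1 = 1/3. -/

import Mathlib

open MeasureTheory Filter Set
open scoped ENNReal NNReal Topology

noncomputable section

namespace ModelFreeBDG

/-- A martingale space: a filtration `F` on `Ω` (with `F 0` trivial) together with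
finitely many basic continuous martingales `S j`, each adapted with all trajectories
continuous.  Time is indexed by `ℝ≥0`. -/
structure MartingaleSpace (Ω : Type*) where
  F : ℝ≥0 → MeasurableSpace Ω
  mono : Monotone F
  F0_trivial : F 0 = ⊥
  d : ℕ
  S : Fin d → ℝ≥0 → Ω → ℝ
  S_adapted : ∀ j t, Measurable[F t] fun ω => S j t ω
  S_cont : ∀ j ω, Continuous fun t => S j t ω

variable {Ω : Type*}

/-- A stopping time w.r.t. the filtration of `M`, with values in `[0,∞]`. -/
def MartingaleSpace.IsStoppingTime (M : MartingaleSpace Ω) (τ : Ω → ℝ≥0∞) : Prop :=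
  ∀ t : ℝ≥0, MeasurableSet[M.F t] {ω | τ ω ≤ (t : ℝ≥0∞)}

/-- `g` is measurable with respect to the σ-field `F_τ` generated by the stopping time `τ`. -/
def MartingaleSpace.MeasStopped (M : MartingaleSpace Ω) (τ : Ω → ℝ≥0∞) (g : Ω → ℝ) : Prop :=
  ∀ B : Set ℝ, MeasurableSet B → ∀ t : ℝ≥0,
    MeasurableSet[M.F t] {ω | g ω ∈ B ∧ τ ω ≤ (t : ℝ≥0∞)}

/-- A proper sequence of stopping times: nondecreasing, starting from `0`, and on each path
either divergent to `+∞` or eventually constant. -/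
structure ProperSeq (M : MartingaleSpace Ω) where
  τ : ℕ → Ω → ℝ≥0∞
  stopping : ∀ n, M.IsStoppingTime (τ n)
  mono : ∀ ω, Monotone fun n => τ n ω
  zero : ∀ ω, τ 0 ω = 0
  proper : ∀ ω, Tendsto (fun n => τ n ω) atTop (𝓝 ⊤) ∨ ∃ n, ∀ m, n ≤ m → τ m ω = τ n ω

/-- A simple trading strategy. -/
structure SimpleStrategy (M : MartingaleSpace Ω) where
  c : ℝ
  τ : ProperSeq M
  g : ℕ → Ω → ℝ
  g_bdd : ∀ n, ∃ C : ℝ, ∀ ω, |g n ω| ≤ C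
  g_meas : ∀ n, M.MeasStopped (τ.τ n) (g n)
  g_top : ∀ n ω, τ.τ n ω = ⊤ → g n ω = 0

/-- `τ(ω) ∧ t`, as an element of `ℝ≥0`. -/
def stopMin (τ : Ω → ℝ≥0∞) (t : ℝ≥0) (ω : Ω) : ℝ≥0 :=
  (min (τ ω) (t : ℝ≥0∞)).toNNReal

/-- The simple integral `(G·X)_t = c + Σ_{n≥1} g_{n-1}(X_{τ_n∧t} - X_{τ_{n-1}∧t})` for a
real process `X`. -/
def SimpleStrategy.integral {M : MartingaleSpace Ω} (G : SimpleStrategy M)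
    (X : ℝ≥0 → Ω → ℝ) (t : ℝ≥0) (ω : Ω) : ℝ :=
  G.c + ∑' n : ℕ,
    G.g n ω * (X (stopMin (G.τ.τ (n + 1)) t ω) ω - X (stopMin (G.τ.τ n) t ω) ω)

/-- A simple capital process: a finite sum `Σ_{j} (G^j · S^j)` over simple trading strategies. -/
def IsSimpleCapital (M : MartingaleSpace Ω) (X : ℝ≥0 → Ω → ℝ) : Prop :=
  ∃ G : Fin M.d → SimpleStrategy M, ∀ t ω, X t ω = ∑ j, (G j).integral (M.S j) t ω

/-- The class `𝓒` of nonnegative supermartingales: the smallest class of `[-∞,∞]`-valued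
processes containing all nonnegative simple capital processes, closed under adding a simple
capital process whenever the sum stays nonnegative, and closed under pointwise `liminf`. -/
inductive IsNonnegSupermart (M : MartingaleSpace Ω) : (ℝ≥0 → Ω → EReal) → Prop
  | simple (X : ℝ≥0 → Ω → ℝ) (hX : IsSimpleCapital M X) (hpos : ∀ t ω, 0 ≤ X t ω) :
      IsNonnegSupermart M fun t ω => (X t ω : EReal)
  | add (X : ℝ≥0 → Ω → EReal) (Y : ℝ≥0 → Ω → ℝ) (hX : IsNonnegSupermart M X)
      (hY : IsSimpleCapital M Y) (hpos : ∀ t ω, 0 ≤ X t ω + (Y t ω : EReal)) :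
      IsNonnegSupermart M fun t ω => X t ω + (Y t ω : EReal)
  | liminf (Xs : ℕ → ℝ≥0 → Ω → EReal) (hXs : ∀ n, IsNonnegSupermart M (Xs n)) :
      IsNonnegSupermart M fun t ω => Filter.liminf (fun n => Xs n t ω) atTop

/-- The upper expectation `Ē Y` of a generalized process `Y`: the infimum of the (deterministic)
initial values of nonnegative supermartingales dominating `Y`. -/
def upperExp (M : MartingaleSpace Ω) (Y : ℝ≥0 → Ω → EReal) : EReal :=
  sInf {x : EReal | ∃ X, IsNonnegSupermart M X ∧ (∀ ω, X 0 ω = x) ∧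
    ∀ t ω, Y t ω ≤ X t ω}

/-- The outer measure `P̄ A := Ē 1_A` of a set of pairs `(t, ω)`. -/
def upperProb (M : MartingaleSpace Ω) (A : Set (ℝ≥0 × Ω)) : EReal :=
  upperExp M fun t ω => A.indicator (fun _ => (1 : EReal)) (t, ω)

/-- A set `E ⊆ [0,∞) × Ω` is instantly enforceable if some nonnegative supermartingale with
initial value `1` becomes `+∞` outside of `E`. -/
def InstantlyEnforceable (M : MartingaleSpace Ω) (E : Set (ℝ≥0 × Ω)) : Prop :=
  ∃ X, IsNonnegSupermart M X ∧ (∀ ω, X 0 ω = 1) ∧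
    ∀ t ω, (t, ω) ∉ E → X t ω = ⊤

/-- A set is instantly blockable iff its complement is instantly enforceable. -/
def InstantlyBlockable (M : MartingaleSpace Ω) (B : Set (ℝ≥0 × Ω)) : Prop :=
  InstantlyEnforceable M Bᶜ

/-- Assumption A: for any `t ≥ 0` and any instantly blockable set `B`, the projection of
`B ∩ ([0,t] × Ω)` onto `Ω` belongs to `F t`. -/
def AssumptionA (M : MartingaleSpace Ω) : Prop :=
  ∀ (t : ℝ≥0) (B : Set (ℝ≥0 × Ω)), InstantlyBlockable M B →
    MeasurableSet[M.F t] {ω | ∃ s : ℝ≥0, s ≤ t ∧ (s, ω) ∈ B}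

/-- The values of `X` are real w.i.e. -/
def RealWIE (M : MartingaleSpace Ω) (X : ℝ≥0 → Ω → EReal) : Prop :=
  InstantlyEnforceable M {p : ℝ≥0 × Ω | ∃ r : ℝ, X p.1 p.2 = (r : EReal)}

/-- The set of `(t,ω)` where `sup_{s ∈ [0,t]} |X_s(ω) - X^n_s(ω)| → 0` as `n → ∞`. -/
def unifConvSet (Xn : ℕ → ℝ≥0 → Ω → EReal) (X : ℝ≥0 → Ω → EReal) : Set (ℝ≥0 × Ω) :=
  {p | Tendsto (fun n => ⨆ s ∈ Icc (0 : ℝ≥0) p.1, (X s p.2 - Xn n s p.2).abs)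
    atTop (𝓝 (0 : ℝ≥0∞))}

/-- The class `𝓜` of martingales: the smallest class of adapted, real w.i.e. processes
containing all simple capital processes and closed under locally uniform limits w.i.e. -/
inductive IsMartingale (M : MartingaleSpace Ω) : (ℝ≥0 → Ω → EReal) → Prop
  | simple (X : ℝ≥0 → Ω → ℝ) (hX : IsSimpleCapital M X) :
      IsMartingale M fun t ω => (X t ω : EReal)
  | lim (Xn : ℕ → ℝ≥0 → Ω → EReal) (X : ℝ≥0 → Ω → EReal)
      (hXn : ∀ n, IsMartingale M (Xn n))
      (hadapted : ∀ t, Measurable[M.F t] (X t))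
      (hreal : RealWIE M X)
      (hconv : InstantlyEnforceable M (unifConvSet Xn X)) :
      IsMartingale M X

/-- `X_{τ ∧ t}(ω)`. -/
def stopVal (X : ℝ≥0 → Ω → EReal) (τ : Ω → ℝ≥0∞) (t : ℝ≥0) (ω : Ω) : EReal :=
  X (stopMin τ t ω) ω

/-- The simple quadratic variation `[X]^τ_t := Σ_{n≥1} (X_{τ_n∧t} - X_{τ_{n-1}∧t})²`,
as an element of `[0,∞]`. -/
def sqVarAlong (X : ℝ≥0 → Ω → EReal) (τ : ℕ → Ω → ℝ≥0∞) (t : ℝ≥0) (ω : Ω) : ℝ≥0∞ :=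
  ∑' n : ℕ, ((stopVal X (τ (n + 1)) t ω - stopVal X (τ n) t ω) ^ 2).abs

/-- `Y^{τ,*}_t := sup_n |Y_{τ_n ∧ t}|`, as an element of `[0,∞]`. -/
def supAlong (Y : ℝ≥0 → Ω → EReal) (τ : ℕ → Ω → ℝ≥0∞) (t : ℝ≥0) (ω : Ω) : ℝ≥0∞ :=
  ⨆ n : ℕ, (stopVal Y (τ n) t ω).abs

/-- The supremum process `Y^*_t := sup_{0 ≤ s ≤ t} |Y_s|`, as an element of `[0,∞]`. -/
def supProc (Y : ℝ≥0 → Ω → EReal) (t : ℝ≥0) (ω : Ω) : ℝ≥0∞ :=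
  ⨆ s ∈ Icc (0 : ℝ≥0) t, (Y s ω).abs

/-- The hitting time `σ(X,c) := inf {t ≥ 0 : |X_t| ≥ c}`. -/
def hitting (X : ℝ≥0 → Ω → EReal) (c : ℝ) (ω : Ω) : ℝ≥0∞ :=
  ⨅ t ∈ {t : ℝ≥0 | ENNReal.ofReal c ≤ (X t ω).abs}, (t : ℝ≥0∞)

/-- The oscillation of the trajectory of `X` on `[a,b]`. -/
def oscOn (X : ℝ≥0 → Ω → EReal) (a b : ℝ≥0) (ω : Ω) : EReal :=
  (⨆ s ∈ Icc a b, X s ω) - ⨅ s ∈ Icc a b, X s ω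

/-- The set of `(t,ω)` on which the sequence `σ` finely covers `X` with accuracy `δ`:
only finitely many `σ_n(ω) ≤ t`, and the oscillation of `X(ω)` on each interval
`[σ_n(ω)∧t, σ_{n+1}(ω)∧t]` is at most `δ`. -/
def fineCoverSet (σ : ℕ → Ω → ℝ≥0∞) (X : ℝ≥0 → Ω → EReal) (δ : ℝ) : Set (ℝ≥0 × Ω) :=
  {p | {n : ℕ | σ n p.2 ≤ (p.1 : ℝ≥0∞)}.Finite ∧
    ∀ n, oscOn X (stopMin (σ n) p.1 p.2) (stopMin (σ (n + 1)) p.1 p.2) p.2 ≤ (δ : EReal)}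

/-- `σ` is a fine cover of `X` with accuracy `δ` on the set `E`. -/
def FinelyCoversOn (M : MartingaleSpace Ω) (σ : ℕ → Ω → ℝ≥0∞) (X : ℝ≥0 → Ω → EReal)
    (δ : ℝ) (E : Set (ℝ≥0 × Ω)) : Prop :=
  (∀ n, M.IsStoppingTime (σ n)) ∧ (∀ ω, Monotone fun n => σ n ω) ∧ (∀ ω, σ 0 ω = 0) ∧
    E ⊆ fineCoverSet σ X δ

/-- `σ` is a fine cover of `X` with accuracy `δ` w.i.e. -/
def ProperSeq.FinelyCoversWIE {M : MartingaleSpace Ω} (σ : ProperSeq M)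
    (X : ℝ≥0 → Ω → EReal) (δ : ℝ) : Prop :=
  InstantlyEnforceable M (fineCoverSet σ.τ X δ)

/-- The set of `(t,ω)` on which `sup_{s ∈ [0, σ(ω) ∧ t]} |Y^m_s(ω) - Y_s(ω)| → 0`, i.e.
locally uniform convergence on the random interval `[0,σ]∖{+∞}`. -/
def convWithinSet (Ym : ℕ → ℝ≥0 → Ω → EReal) (Y : ℝ≥0 → Ω → EReal) (σ : Ω → ℝ≥0∞) :
    Set (ℝ≥0 × Ω) :=
  {p | Tendsto (fun m => ⨆ s ∈ Icc (0 : ℝ≥0) (stopMin σ p.1 p.2),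
    (Ym m s p.2 - Y s p.2).abs) atTop (𝓝 (0 : ℝ≥0∞))}

/-- The set of `(t,ω)` on which `sup_{s ∈ [0,t]} |Y^m_s(ω) - Y_s(ω)| → 0`, i.e. locally
uniform convergence. -/
def locUnifConvSet (Ym : ℕ → ℝ≥0 → Ω → EReal) (Y : ℝ≥0 → Ω → EReal) : Set (ℝ≥0 × Ω) :=
  {p | Tendsto (fun m => ⨆ s ∈ Icc (0 : ℝ≥0) p.1, (Ym m s p.2 - Y s p.2).abs)
    atTop (𝓝 (0 : ℝ≥0∞))}

/-- `Q` is a quadratic variation of `X`: a real continuous adapted process such that, for every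
summable sequence of positive accuracies `δ_m` and every sequence of proper sequences of
stopping times `σ^m` finely covering `X` with accuracy `δ_m` w.i.e., and every `c > 0`, the
simple quadratic variations `[X]^{σ^m}` converge locally uniformly on `[0, σ(X,c)]∖{+∞}`
w.i.e. to `Q`. -/
structure IsQuadVar (M : MartingaleSpace Ω) (X : ℝ≥0 → Ω → EReal) (Q : ℝ≥0 → Ω → ℝ) :
    Prop where
  adapted : ∀ t, Measurable[M.F t] (Q t)
  cont : ∀ ω, Continuous fun t => Q t ω
  conv : ∀ δ : ℕ → ℝ, (∀ m, 0 < δ m) → Summable δ →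
    ∀ σ : ℕ → ProperSeq M, (∀ m, (σ m).FinelyCoversWIE X (δ m)) →
    ∀ c : ℝ, 0 < c →
      InstantlyEnforceable M (convWithinSet
        (fun m t ω => ((sqVarAlong X (σ m).τ t ω : ℝ≥0∞) : EReal))
        (fun t ω => ((Q t ω : ℝ) : EReal)) (hitting X c))

open Classical in
/-- The Lebesgue–Stieltjes measure on `ℝ` associated with a monotone continuous function
(and the zero measure otherwise). -/
def lsMeasure (a : ℝ → ℝ) : Measure ℝ :=
  if h : Monotone a ∧ Continuous a then
    StieltjesFunction.measure ⟨a, h.1, fun _ => h.2.continuousWithinAt⟩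
  else 0

/-- The pathwise Lebesgue–Stieltjes integral `∫_0^t g dа` for functions on `ℝ≥0`. -/
def lsInt (g : ℝ≥0 → ℝ) (a : ℝ≥0 → ℝ) (t : ℝ≥0) : ℝ :=
  ∫ s in Ioc (0 : ℝ) (t : ℝ), g s.toNNReal ∂(lsMeasure fun s => a s.toNNReal)

/-- The pathwise Lebesgue–Stieltjes integral `∫_0^t g d(¼ Qp − ¼ Qm)`, i.e. the integral
with respect to a quadratic covariation `[X,Y] = ¼[X+Y] − ¼[X−Y]`. -/
def covIntegral (g : ℝ≥0 → ℝ) (Qp Qm : ℝ≥0 → ℝ) (t : ℝ≥0) : ℝ :=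
  (1 / 4 : ℝ) * lsInt g Qp t - (1 / 4 : ℝ) * lsInt g Qm t

/-- The step process associated with a simple trading strategy:
`G_t = Σ_{n≥1} g_{n-1} 1_{[τ_{n-1}, τ_n)}(t)`. -/
def SimpleStrategy.step {M : MartingaleSpace Ω} (G : SimpleStrategy M) (t : ℝ≥0) (ω : Ω) :
    ℝ :=
  ∑' n : ℕ, ({t' : ℝ≥0 | G.τ.τ n ω ≤ (t' : ℝ≥0∞) ∧ (t' : ℝ≥0∞) < G.τ.τ (n + 1) ω}).indicator
    (fun _ => G.g n ω) t

/-- The simple integral `(G·X)` of a simple trading strategy against an `EReal`-valued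
process. -/
def SimpleStrategy.integralE {M : MartingaleSpace Ω} (G : SimpleStrategy M)
    (X : ℝ≥0 → Ω → EReal) (t : ℝ≥0) (ω : Ω) : EReal :=
  (G.c : EReal) + ∑' n : ℕ,
    (G.g n ω : EReal) * (stopVal X (G.τ.τ (n + 1)) t ω - stopVal X (G.τ.τ n) t ω)

/-- Membership in the space `𝓡` of generalized processes whose trajectories are Borel
measurable and real on every interval `[0,t]` w.i.e. -/
def MemR (M : MartingaleSpace Ω) (G : ℝ≥0 → Ω → EReal) : Prop :=
  InstantlyEnforceable M {p : ℝ≥0 × Ω |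
    (∀ s ∈ Icc (0 : ℝ≥0) p.1, ∃ r : ℝ, G s p.2 = (r : EReal)) ∧
    Measurable ((Icc (0 : ℝ≥0) p.1).restrict fun s => G s p.2)}

/-- The pseudo-distance `d_{∞,X,loc}(Y,Z) := Σ_{N≥1} 2^{-N} Ē((Y−Z)^*_{·∧σ(X,N)})`. -/
def dInfLoc (M : MartingaleSpace Ω) (X : ℝ≥0 → Ω → EReal) (Y Z : ℝ≥0 → Ω → EReal) :
    EReal :=
  ∑' N : ℕ, (((1 / 2 : ℝ) ^ (N + 1) : ℝ) : EReal) *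
    upperExp M (fun t ω =>
      ((⨆ s ∈ Icc (0 : ℝ≥0) (stopMin (hitting X ((N : ℝ) + 1)) t ω),
        (Y s ω - Z s ω).abs : ℝ≥0∞) : EReal))

/-- The approximating stopping times `τ^m_n` for a càdlàg integrand `G`:
`τ^m_0 = 0`, `τ^m_{n+1} = inf{t > τ^m_n : |G_t − G_{τ^m_n}| ≥ 2^{-m}}`. -/
def approxTimes (G : ℝ≥0 → Ω → ℝ) (m : ℕ) : ℕ → Ω → ℝ≥0∞
  | 0 => fun _ => 0
  | n + 1 => fun ω =>
      ⨅ t ∈ {t : ℝ≥0 | approxTimes G m n ω < (t : ℝ≥0∞) ∧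
        ((2 : ℝ) ^ m)⁻¹ ≤ |G t ω - G ((approxTimes G m n ω).toNNReal) ω|}, (t : ℝ≥0∞)

/-- The approximating simple integral `(G^m · X)` where
`G^m_t = Σ_{n≥1} G_{τ^m_{n-1}} 1_{[τ^m_{n-1}, τ^m_n)}(t)`. -/
def approxInt (G : ℝ≥0 → Ω → ℝ) (X : ℝ≥0 → Ω → EReal) (m : ℕ) (t : ℝ≥0) (ω : Ω) :
    EReal :=
  ∑' n : ℕ, ((G ((approxTimes G m n ω).toNNReal) ω : ℝ) : EReal) *
    (stopVal X (approxTimes G m (n + 1)) t ω - stopVal X (approxTimes G m n) t ω)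

/-- `I` is a model-free integral `G·X`: a representative of the `d_{∞,X,loc}`-limit of the
classes of the approximating simple integrals `G^m·X`. -/
def IsModelFreeIntegral (M : MartingaleSpace Ω) (X : ℝ≥0 → Ω → EReal) (G : ℝ≥0 → Ω → ℝ)
    (I : ℝ≥0 → Ω → EReal) : Prop :=
  Tendsto (fun m => dInfLoc M X (approxInt G X m) I) atTop (𝓝 (0 : EReal))

/-- The filtration of `M` is right-continuous. -/
def RightContinuousFiltration (M : MartingaleSpace Ω) : Prop :=
  ∀ t : ℝ≥0, M.F t = ⨅ (s : ℝ≥0) (_ : t < s), M.F s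

/-- A càdlàg function on `ℝ≥0`. -/
def IsCadlag (f : ℝ≥0 → ℝ) : Prop :=
  (∀ t, ContinuousWithinAt f (Ici t) t) ∧
    ∀ t : ℝ≥0, 0 < t → ∃ l : ℝ, Tendsto f (𝓝[<] t) (𝓝 l)

/-- The truncated variation `TV^c(x,[0,t])` of a function `x : ℝ≥0 → ℝ`. -/
def truncVar (x : ℝ≥0 → ℝ) (c : ℝ) (t : ℝ≥0) : ℝ≥0∞ :=
  ⨆ (n : ℕ) (u : Fin (n + 1) → ℝ≥0) (_ : Monotone u) (_ : ∀ i, u i ≤ t),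
    ∑ i : Fin n, ENNReal.ofReal (|x (u i.succ) - x (u i.castSucc)| - c)

/-!
The proof is pathwise. For a real sequence started at `0`, with running maximum `m` and square
function `s`, Davis-type potentials `V` give both `m - 3 s ≤ V` and `V (n + 1) ≤ V n + h n * Δx n`
for an explicit hedge `h`, and also with the roles of `m` and `s` exchanged. Garsia's summation
by parts raises this to `m ^ p ≤ (3 p) ^ p * s ^ p + ∑ H n * Δx n`, and
`(3 p) ^ p ≤ 6 ^ p (p - 1) ^ (p - 1)`. The last sum is the capital of a trading strategy in `X`.
Truncating the strategy, and replacing `X` by simple capital processes up to a small error paid for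
by an instant enforcement, turns the pathwise inequality into one between upper expectations.
-/

/-! ### Davis potentials -/

/-- One step of a real sequence, seen through its state `(x, s, m)`: current value, square function
and a bound on the past. The increment `d` leads to `(x + d, t, max m |x + d|)`. -/
structure IsStateStep (x d s t m : ℝ) : Prop where
  nonneg : 0 ≤ s
  nonneg' : 0 ≤ t
  sq_eq : t ^ 2 = s ^ 2 + d ^ 2
  abs_le : |x| ≤ m

namespace IsStateStep

variable {x d s t m : ℝ}

lemma le (h : IsStateStep x d s t m) : s ≤ t :=
  le_of_sq_le_sq (by rw [h.sq_eq]; linarith [sq_nonneg d]) h.nonneg'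

lemma abs_increment_le (h : IsStateStep x d s t m) : |d| ≤ t :=
  abs_le_of_sq_le_sq (by rw [h.sq_eq]; linarith [sq_nonneg s]) h.nonneg'

lemma neg (h : IsStateStep x d s t m) : IsStateStep (-x) (-d) s t m :=
  ⟨h.nonneg, h.nonneg', by rw [h.sq_eq, neg_sq], by rw [abs_neg]; exact h.abs_le⟩

lemma sq_div_le_of_le_three_mul (h : IsStateStep x d s t m) (hs : 0 < s) (hnear : t ≤ 3 * s) :
    d ^ 2 / (2 * s) ≤ 2 * (t - s) := by
  rw [div_le_iff₀ (by positivity)]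
  nlinarith [h.sq_eq, mul_nonneg (sub_nonneg.2 h.le) (sub_nonneg.2 hnear)]

end IsStateStep

/-- The amount by which `|x|` exceeds `max m s - s`; it is positive when `|x|` is within `s` of the
running maximum. -/
def davisExcess (x s m : ℝ) : ℝ := max 0 (|x| + s - max m s)

/-- The potential comparing the running maximum `m` with three times the square function `s`. -/
def maxPotential (x s m : ℝ) : ℝ := max m s + davisExcess x s m ^ 2 / (2 * s) - 3 * s

/-- The derivative of `maxPotential` in the current value, used as the hedge. -/
def maxHedge (x s m : ℝ) : ℝ := (if 0 ≤ x then 1 else -1) * (davisExcess x s m / s)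

/-- The potential comparing the square function `s` with three times the running maximum `m`. -/
def sqVarPotential (x s m : ℝ) : ℝ :=
  (m ^ 2 - x ^ 2) / (2 * √(s ^ 2 + m ^ 2)) + √(s ^ 2 + m ^ 2) - 3 * m

/-- The derivative of `sqVarPotential` in the current value, used as the hedge. -/
def sqVarHedge (x s m : ℝ) : ℝ := -x / √(s ^ 2 + m ^ 2)

section MaxPotential

variable {x d s t m : ℝ}

lemma davisExcess_nonneg (x s m : ℝ) : 0 ≤ davisExcess x s m := le_max_left _ _

lemma davisExcess_le (hs : 0 ≤ s) (hm : |x| ≤ m) : davisExcess x s m ≤ s :=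
  max_le hs (by linarith [le_max_left m s])

lemma davisExcess_le_abs (x s m : ℝ) : davisExcess x s m ≤ |x| :=
  max_le (abs_nonneg _) (by linarith [le_max_right m s])

lemma davisExcess_neg (x s m : ℝ) : davisExcess (-x) s m = davisExcess x s m := by
  rw [davisExcess, davisExcess, abs_neg]

lemma maxPotential_neg (x s m : ℝ) : maxPotential (-x) s m = maxPotential x s m := by
  rw [maxPotential, maxPotential, davisExcess_neg]

lemma sub_le_maxPotential (hs : 0 ≤ s) : m - 3 * s ≤ maxPotential x s m := by
  have hquot : 0 ≤ davisExcess x s m ^ 2 / (2 * s) := by positivity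
  rw [maxPotential]
  linarith [le_max_left m s]

lemma davisExcess_sq_div_le (hs : 0 ≤ s) (hm : |x| ≤ m) :
    davisExcess x s m ^ 2 / (2 * s) ≤ s / 2 := by
  rcases hs.eq_or_lt with rfl | hs
  · simp
  · rw [div_le_iff₀ (by positivity)]
    linarith [pow_le_pow_left₀ (davisExcess_nonneg x s m) (davisExcess_le hs.le hm) 2]

lemma maxPotential_le_of_step (h : IsStateStep x d s t m) :
    maxPotential (x + d) t (max m |x + d|) ≤ m := by
  have hexcess := davisExcess_sq_div_le h.nonneg' (le_max_right m |x + d|)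
  have hmax : max (max m |x + d|) t ≤ m + t :=
    max_le (max_le (by linarith [h.nonneg'])
      (by linarith [abs_add_le x d, h.abs_le, h.abs_increment_le]))
      (by linarith [abs_nonneg x, h.abs_le])
  rw [maxPotential]
  linarith [h.nonneg']

lemma maxPotential_step_of_zero (d : ℝ) :
    maxPotential d |d| |d| ≤ maxPotential 0 0 0 + maxHedge 0 0 0 * d := by
  have hle : maxPotential d |d| |d| ≤ 0 := by
    have hexcess := davisExcess_sq_div_le (abs_nonneg d) (le_refl |d|)
    rw [maxPotential, max_self]
    linarith [abs_nonneg d]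
  simpa [maxPotential, maxHedge, davisExcess] using hle

lemma maxPotential_step_of_three_mul_le (h : IsStateStep x d s t m) (hs : 0 < s)
    (hfar : 3 * s ≤ t) (hmax : max (max m |x + d|) t - max m s ≤ t - s) :
    maxPotential (x + d) t (max m |x + d|) ≤
      maxPotential x s m - davisExcess x s m / s * |d| := by
  have hws : davisExcess x s m ≤ s := davisExcess_le hs.le h.abs_le
  have hsd : s ≤ |d| := by
    refine (abs_le_of_sq_le_sq' ?_ (abs_nonneg d)).2
    rw [sq_abs]
    nlinarith [h.sq_eq]
  have hexcess := davisExcess_sq_div_le h.nonneg' (le_max_right m |x + d|)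
  have hedge : davisExcess x s m / s * |d| - davisExcess x s m ^ 2 / (2 * s) ≤ |d| - s / 2 := by
    have hcombine : davisExcess x s m / s * |d| - davisExcess x s m ^ 2 / (2 * s) =
        (2 * davisExcess x s m * |d| - davisExcess x s m ^ 2) / (2 * s) := by field_simp
    rw [hcombine, div_le_iff₀ (by positivity)]
    nlinarith [mul_nonneg (sub_nonneg.2 hws) (sub_nonneg.2 hsd), sq_nonneg (s - davisExcess x s m)]
  rw [maxPotential, maxPotential]
  linarith [h.abs_increment_le]

lemma maxPotential_step_of_sign_change (h : IsStateStep x d s t m) (hs : 0 < s)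
    (hnear : t ≤ 3 * s) (hx : 0 ≤ x) (hxd : x + d ≤ 0)
    (hmax : max (max m |x + d|) t - max m s ≤ t - s) :
    maxPotential (x + d) t (max m |x + d|) ≤ maxPotential x s m + davisExcess x s m / s * d := by
  have hwx : davisExcess x s m ≤ x := (davisExcess_le_abs x s m).trans_eq (abs_of_nonneg hx)
  have hnew : davisExcess (x + d) t (max m |x + d|) ^ 2 / (2 * t) ≤ (-(x + d)) ^ 2 / (2 * s) := by
    gcongr
    · exact davisExcess_nonneg _ _ _
    · exact (davisExcess_le_abs _ _ _).trans_eq (abs_of_nonpos hxd)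
    · exact h.le
  have hold : (-(x + d)) ^ 2 / (2 * s) ≤
      d ^ 2 / (2 * s) + davisExcess x s m ^ 2 / (2 * s) + davisExcess x s m / s * d := by
    have hcombine : d ^ 2 / (2 * s) + davisExcess x s m ^ 2 / (2 * s) + davisExcess x s m / s * d =
        (-(davisExcess x s m + d)) ^ 2 / (2 * s) := by field_simp; ring
    rw [hcombine]
    gcongr
    linarith
  rw [maxPotential, maxPotential]
  linarith [h.sq_div_le_of_le_three_mul hs hnear]

lemma add_sq_div_le {u s e f : ℝ} (hs : 0 < s) (hf : 0 ≤ f) (hfe : f ≤ e) :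
    (u + f) ^ 2 / (2 * (s + e)) ≤ u ^ 2 / (2 * s) + f / 2 := by
  have hgap : u ^ 2 / (2 * s) + f / 2 - (u + f) ^ 2 / (2 * (s + e)) =
      ((u ^ 2 + s * f) * (e - f) + f * (u - s) ^ 2) / (2 * s * (s + e)) := by
    have : s + e ≠ 0 := by linarith
    field_simp
    ring
  have : 0 ≤ e - f := sub_nonneg.2 hfe
  have : 0 ≤ e := hf.trans hfe
  have hgap_nonneg : 0 ≤ ((u ^ 2 + s * f) * (e - f) + f * (u - s) ^ 2) / (2 * s * (s + e)) := by
    positivity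
  linarith

lemma maxPotential_step_of_same_sign (h : IsStateStep x d s t m) (hs : 0 < s)
    (hnear : t ≤ 3 * s) (hx : 0 ≤ x) (hxd : 0 ≤ x + d)
    (hmax : max (max m |x + d|) t - max m s ≤ t - s) :
    maxPotential (x + d) t (max m |x + d|) ≤ maxPotential x s m + davisExcess x s m / s * d := by
  set R := max m s
  set R' := max (max m |x + d|) t
  have hRR : R ≤ R' := max_le_max (le_max_left _ _) h.le
  have hnew : davisExcess (x + d) t (max m |x + d|) ^ 2 ≤
      (davisExcess x s m + d + ((t - s) - (R' - R))) ^ 2 := by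
    rw [davisExcess]
    rcases le_total (|x + d| + t - R') 0 with hneg | hpos
    · rw [max_eq_left hneg, zero_pow two_ne_zero]
      positivity
    · rw [max_eq_right hpos]
      have hw : |x| + s - R ≤ davisExcess x s m := le_max_right _ _
      rw [abs_of_nonneg hx] at hw
      rw [abs_of_nonneg hxd] at hpos ⊢
      exact pow_le_pow_left₀ hpos (by linarith) 2
  have hquot : davisExcess (x + d) t (max m |x + d|) ^ 2 / (2 * t) ≤
      (davisExcess x s m + d) ^ 2 / (2 * s) + ((t - s) - (R' - R)) / 2 := by
    refine (div_le_div_of_nonneg_right hnew (by linarith [h.nonneg'])).trans ?_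
    have hyoung := add_sq_div_le (u := davisExcess x s m + d) hs
      (sub_nonneg.2 hmax) (by linarith : (t - s) - (R' - R) ≤ t - s)
    rwa [add_sub_cancel] at hyoung
  have hsquare : (davisExcess x s m + d) ^ 2 / (2 * s) =
      davisExcess x s m ^ 2 / (2 * s) + davisExcess x s m / s * d + d ^ 2 / (2 * s) := by
    field_simp; ring
  rw [maxPotential, maxPotential]
  linarith [h.sq_div_le_of_le_three_mul hs hnear]

lemma two_mul_sub_sq_le_of_step (h : IsStateStep x d s t m) (hs : 0 < s) {v : ℝ} (hv : 0 ≤ v)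
    (hvs : v ≤ s) : 2 * d * v - v ^ 2 ≤ 4 * s * (t - s) := by
  rcases le_total t (3 * s) with hnear | hfar
  · nlinarith [sq_nonneg (d - v), h.sq_eq, mul_nonneg (sub_nonneg.2 h.le) (sub_nonneg.2 hnear)]
  · nlinarith [mul_le_mul_of_nonneg_left ((le_abs_self d).trans h.abs_increment_le) hv,
      mul_le_mul_of_nonneg_right hvs h.nonneg']

lemma maxPotential_step_of_new_max (h : IsStateStep x d s t m) (hs : 0 < s) (hx : 0 ≤ x)
    (hmax : t - s < max (max m |x + d|) t - max m s) :
    maxPotential (x + d) t (max m |x + d|) ≤ maxPotential x s m + davisExcess x s m / s * d := by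
  have hd := abs_le.1 h.abs_increment_le
  have hmR : m ≤ max m s := le_max_left m s
  have hsR : s ≤ max m s := le_max_right m s
  have hst := h.le
  have hR' : max (max m |x + d|) t = |x + d| := by
    have hlt : max m s + (t - s) < max (max m |x + d|) t := by linarith
    rcases lt_max_iff.1 hlt with hlt | hlt
    · rcases lt_max_iff.1 hlt with hlt | hlt
      · linarith
      · rw [max_eq_right (by linarith : m ≤ |x + d|), max_eq_left (by linarith)]
    · linarith
  rw [hR'] at hmax
  have hxd : |x + d| = x + d := by
    refine abs_of_nonneg (le_of_not_gt fun hneg => ?_)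
    rw [abs_of_neg hneg] at hmax
    linarith
  have hnew : davisExcess (x + d) t (max m |x + d|) = t := by
    rw [davisExcess, hR', max_eq_right (by linarith)]
    ring
  have hold : davisExcess x s m = x + s - max m s := by
    rw [davisExcess, abs_of_nonneg hx, max_eq_right (by linarith)]
  have hgain := two_mul_sub_sq_le_of_step h hs (v := s - davisExcess x s m)
    (sub_nonneg.2 (davisExcess_le hs.le h.abs_le)) (by linarith [davisExcess_nonneg x s m])
  have hquot : davisExcess x s m ^ 2 / (2 * s) + davisExcess x s m / s * d -
      (davisExcess x s m + d - s / 2 - 2 * (t - s)) =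
      (4 * s * (t - s) - (2 * d * (s - davisExcess x s m) - (s - davisExcess x s m) ^ 2)) /
        (2 * s) := by
    field_simp; ring
  have hquot_nonneg := div_nonneg (sub_nonneg.2 hgain) (by positivity : 0 ≤ 2 * s)
  have hhalf : t ^ 2 / (2 * t) = t / 2 := by
    have : t ≠ 0 := by linarith
    field_simp
  rw [maxPotential, maxPotential, hnew, hR', hhalf, hxd]
  linarith

lemma maxPotential_step_of_nonneg (h : IsStateStep x d s t m) (hs : 0 < s) (hx : 0 ≤ x) :
    maxPotential (x + d) t (max m |x + d|) ≤ maxPotential x s m + davisExcess x s m / s * d := by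
  rcases lt_or_ge (t - s) (max (max m |x + d|) t - max m s) with hnewMax | hmax
  · exact maxPotential_step_of_new_max h hs hx hnewMax
  rcases le_total t (3 * s) with hnear | hfar
  · rcases le_total 0 (x + d) with hxd | hxd
    · exact maxPotential_step_of_same_sign h hs hnear hx hxd hmax
    · exact maxPotential_step_of_sign_change h hs hnear hx hxd hmax
  · have hslope : 0 ≤ davisExcess x s m / s := div_nonneg (davisExcess_nonneg _ _ _) hs.le
    nlinarith [maxPotential_step_of_three_mul_le h hs hfar hmax, neg_abs_le d]

lemma maxPotential_step (h : IsStateStep x d s t m) (hzero : s = 0 → x = 0 ∧ m = 0) :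
    maxPotential (x + d) t (max m |x + d|) ≤ maxPotential x s m + maxHedge x s m * d := by
  rcases h.nonneg.eq_or_lt with rfl | hs
  · obtain ⟨rfl, rfl⟩ := hzero rfl
    have htd : t = |d| := by
      rw [← abs_of_nonneg h.nonneg', ← sq_eq_sq_iff_abs_eq_abs]
      linarith [h.sq_eq]
    simpa [htd] using maxPotential_step_of_zero d
  · rw [maxHedge]
    split_ifs with hx
    · simpa only [one_mul] using maxPotential_step_of_nonneg h hs hx
    · have hneg := maxPotential_step_of_nonneg h.neg hs (by linarith)
      rw [← neg_add, abs_neg, maxPotential_neg, maxPotential_neg, davisExcess_neg] at hneg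
      linarith

end MaxPotential

section SqVarPotential

variable {x d s t m : ℝ}

lemma sub_le_sqVarPotential (hm : |x| ≤ m) : s - 3 * m ≤ sqVarPotential x s m := by
  have hsqrt : s ≤ √(s ^ 2 + m ^ 2) := Real.le_sqrt_of_sq_le (by linarith [sq_nonneg m])
  have hquot : 0 ≤ (m ^ 2 - x ^ 2) / (2 * √(s ^ 2 + m ^ 2)) :=
    div_nonneg (sub_nonneg.2 (sq_le_sq' (neg_le_of_abs_le hm) (le_of_abs_le hm))) (by positivity)
  rw [sqVarPotential]
  linarith

lemma sq_sub_sq_div_le {a b r : ℝ} (hb : 0 ≤ b) (hba : b ≤ a) (har : a ≤ r) :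
    (a ^ 2 - b ^ 2) / (2 * r) ≤ a - b :=
  div_le_of_le_mul₀ (by linarith) (by linarith)
    (by nlinarith [mul_nonneg (sub_nonneg.2 hba) (by linarith : 0 ≤ 2 * r - a - b)])

lemma sqVarPotential_le_of_step (h : IsStateStep x d s t m) :
    sqVarPotential (x + d) t (max m |x + d|) ≤ s := by
  have hs := h.nonneg
  have hb : 0 ≤ |x + d| := abs_nonneg _
  have hbm : |x + d| ≤ max m |x + d| := le_max_right _ _
  have hm' : 0 ≤ max m |x + d| := hb.trans hbm
  have hroot : max m |x + d| ≤ √(t ^ 2 + max m |x + d| ^ 2) :=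
    Real.le_sqrt_of_sq_le (by linarith [sq_nonneg t])
  have hd : |d| ≤ max m |x + d| + |x + d| := by
    have htri := abs_sub (x + d) x
    rw [add_sub_cancel_left] at htri
    linarith [h.abs_le.trans (le_max_left m |x + d|)]
  have hsqrt : √(t ^ 2 + max m |x + d| ^ 2) ≤ s + 2 * max m |x + d| + |x + d| := by
    refine Real.sqrt_le_iff.2 ⟨by positivity, ?_⟩
    rw [h.sq_eq, ← sq_abs d]
    nlinarith [pow_le_pow_left₀ (abs_nonneg d) hd 2, mul_nonneg hs hm', mul_nonneg hs hb,
      mul_nonneg hb hm']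
  have hquot := sq_sub_sq_div_le hb hbm hroot
  rw [sq_abs] at hquot
  rw [sqVarPotential]
  linarith

lemma sqVarPotential_step_of_zero (d : ℝ) :
    sqVarPotential d |d| |d| ≤ sqVarPotential 0 0 0 + sqVarHedge 0 0 0 * d := by
  have hsqrt : √(d ^ 2 + d ^ 2) ≤ 3 * |d| :=
    Real.sqrt_le_iff.2 ⟨by positivity, by rw [mul_pow, sq_abs]; nlinarith [sq_nonneg d]⟩
  simpa [sqVarPotential, sqVarHedge] using hsqrt

lemma sqrt_add_sq_le_of_step {r δ : ℝ} (hr : 0 < r) (hmr : m ≤ r) (hm : 0 ≤ m)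
    (hr2 : r ^ 2 = s ^ 2 + m ^ 2) (ht : t ^ 2 = s ^ 2 + d ^ 2) (hδ : 0 ≤ δ) (hδd : δ ^ 2 ≤ d ^ 2) :
    √(t ^ 2 + (m + δ) ^ 2) ≤ r + (d ^ 2 - δ ^ 2) / (2 * r) + 2 * δ := by
  have hc : 0 ≤ (d ^ 2 - δ ^ 2) / (2 * r) := div_nonneg (sub_nonneg.2 hδd) (by positivity)
  refine Real.sqrt_le_iff.2 ⟨by positivity, ?_⟩
  have hcross : 2 * r * ((d ^ 2 - δ ^ 2) / (2 * r)) = d ^ 2 - δ ^ 2 := by field_simp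
  nlinarith [mul_nonneg hc hδ, mul_nonneg hm hδ, mul_le_mul_of_nonneg_right hmr hδ,
    sq_nonneg ((d ^ 2 - δ ^ 2) / (2 * r)), sq_nonneg δ]

lemma sqVarPotential_step_of_pos (h : IsStateStep x d s t m) (hs : 0 < s) :
    sqVarPotential (x + d) t (max m |x + d|) ≤ sqVarPotential x s m + sqVarHedge x s m * d := by
  have hm : 0 ≤ m := (abs_nonneg x).trans h.abs_le
  set r := √(s ^ 2 + m ^ 2) with hr_def
  have hr : 0 < r := Real.sqrt_pos.2 (by positivity)
  have hr2 : r ^ 2 = s ^ 2 + m ^ 2 := Real.sq_sqrt (by positivity)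
  have hmr : m ≤ r := Real.le_sqrt_of_sq_le (by linarith [sq_nonneg s])
  obtain ⟨δ, hδ⟩ : ∃ δ, max m |x + d| = m + δ := ⟨max m |x + d| - m, by ring⟩
  have hδ0 : 0 ≤ δ := by linarith [le_max_left m |x + d|]
  have hδd : δ ^ 2 ≤ d ^ 2 := by
    have hmax : max m |x + d| ≤ m + |d| :=
      max_le (by linarith [abs_nonneg d]) (by linarith [abs_add_le x d, h.abs_le])
    rw [← sq_abs d]
    exact pow_le_pow_left₀ hδ0 (by linarith) 2
  have hroot := sqrt_add_sq_le_of_step hr hmr hm hr2 h.sq_eq hδ0 hδd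
  have hnum : 0 ≤ (m + δ) ^ 2 - (x + d) ^ 2 := by
    rw [← hδ, sub_nonneg, ← sq_abs (x + d)]
    exact pow_le_pow_left₀ (abs_nonneg _) (le_max_right _ _) 2
  have hrr : r ≤ √(t ^ 2 + (m + δ) ^ 2) :=
    Real.sqrt_le_sqrt (by nlinarith [h.sq_eq, sq_nonneg d, mul_nonneg hm hδ0])
  have hquot : ((m + δ) ^ 2 - (x + d) ^ 2) / (2 * √(t ^ 2 + (m + δ) ^ 2)) ≤
      ((m + δ) ^ 2 - (x + d) ^ 2) / (2 * r) := by gcongr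
  have hexpand : ((m + δ) ^ 2 - (x + d) ^ 2) / (2 * r) = (m ^ 2 - x ^ 2) / (2 * r) + -x / r * d +
      (m * δ / r - (d ^ 2 - δ ^ 2) / (2 * r)) := by
    field_simp; ring
  have hmδ : m * δ / r ≤ δ := by
    rw [div_le_iff₀ hr, mul_comm]
    exact mul_le_mul_of_nonneg_left hmr hδ0
  rw [sqVarPotential, sqVarPotential, sqVarHedge, hδ, ← hr_def]
  linarith

lemma sqVarPotential_step (h : IsStateStep x d s t m) (hzero : s = 0 → x = 0 ∧ m = 0) :
    sqVarPotential (x + d) t (max m |x + d|) ≤ sqVarPotential x s m + sqVarHedge x s m * d := by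
  rcases h.nonneg.eq_or_lt with rfl | hs
  · obtain ⟨rfl, rfl⟩ := hzero rfl
    have htd : t = |d| := by
      rw [← abs_of_nonneg h.nonneg', ← sq_eq_sq_iff_abs_eq_abs]
      linarith [h.sq_eq]
    simpa [htd] using sqVarPotential_step_of_zero d
  · exact sqVarPotential_step_of_pos h hs

end SqVarPotential

/-! ### Garsia's summation and the pathwise inequalities -/

lemma mul_rpow_sub_one_le {p a b : ℝ} (hp : 1 ≤ p) (ha : 0 ≤ a) (hb : 0 ≤ b) :
    a * b ^ (p - 1) ≤ a ^ p / p + (p - 1) / p * b ^ p := by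
  have hp0 : 0 < p := by linarith
  have hmean := Real.geom_mean_le_arith_mean2_weighted (w₁ := 1 / p) (w₂ := (p - 1) / p)
    (by positivity) (div_nonneg (by linarith) hp0.le) (Real.rpow_nonneg ha p)
    (Real.rpow_nonneg hb p) (by field_simp; ring)
  rwa [← Real.rpow_mul ha, ← Real.rpow_mul hb, mul_one_div_cancel hp0.ne', Real.rpow_one,
    mul_div_cancel₀ _ hp0.ne', one_div_mul_eq_div] at hmean

lemma rpow_sub_one_mul_self {p a : ℝ} (hp : 1 ≤ p) (ha : 0 ≤ a) : a ^ (p - 1) * a = a ^ p := by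
  rw [← Real.rpow_add_one' ha (by linarith), sub_add_cancel]

section Garsia

variable {p : ℝ} {A V u : ℕ → ℝ}

lemma rpow_mul_potential_le_sum (hp : 1 ≤ p) (hA0 : ∀ n, 0 ≤ A n) (hA : Monotone A)
    (hV0 : V 0 ≤ 0) (hstep : ∀ n, V (n + 1) ≤ V n + u n) (hVA : ∀ n, V (n + 1) ≤ A n) (n : ℕ) :
    A n ^ (p - 1) * V n - (p - 1) / p * A n ^ p ≤
      ∑ k ∈ Finset.range n, A k ^ (p - 1) * u k := by
  have hp0 : 0 < p := by linarith
  induction n with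
  | zero =>
    have hpot : A 0 ^ (p - 1) * V 0 ≤ 0 :=
      mul_nonpos_of_nonneg_of_nonpos (Real.rpow_nonneg (hA0 0) _) hV0
    have hpow : 0 ≤ (p - 1) / p * A 0 ^ p :=
      mul_nonneg (div_nonneg (by linarith) hp0.le) (Real.rpow_nonneg (hA0 0) _)
    rw [Finset.sum_range_zero]
    linarith
  | succ n ih =>
    rw [Finset.sum_range_succ]
    have hyoung := mul_rpow_sub_one_le hp (hA0 n) (hA0 (n + 1))
    have hincr : A n ^ (p - 1) ≤ A (n + 1) ^ (p - 1) :=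
      Real.rpow_le_rpow (hA0 n) (hA n.le_succ) (by linarith)
    have hweight : (A (n + 1) ^ (p - 1) - A n ^ (p - 1)) * V (n + 1) ≤
        (A (n + 1) ^ (p - 1) - A n ^ (p - 1)) * A n :=
      mul_le_mul_of_nonneg_left (hVA n) (sub_nonneg.2 hincr)
    have hpot : A n ^ (p - 1) * V (n + 1) ≤ A n ^ (p - 1) * (V n + u n) :=
      mul_le_mul_of_nonneg_left (hstep n) (Real.rpow_nonneg (hA0 n) _)
    have hsplit : (p - 1) / p * A n ^ p = A n ^ p - A n ^ p / p := by field_simp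
    linarith [rpow_sub_one_mul_self hp (hA0 n)]

lemma rpow_le_of_potential {Z : ℕ → ℝ} {K : ℝ} (hp : 1 ≤ p) (hK : 0 ≤ K) (hA0 : ∀ n, 0 ≤ A n)
    (hA : Monotone A) (hZ : ∀ n, 0 ≤ Z n) (hV0 : V 0 ≤ 0) (hstep : ∀ n, V (n + 1) ≤ V n + u n)
    (hVA : ∀ n, V (n + 1) ≤ A n) (hge : ∀ n, A n - K * Z n ≤ V n) (N : ℕ) :
    A N ^ p ≤ (K * p) ^ p * Z N ^ p + ∑ n ∈ Finset.range N, p ^ 2 * A n ^ (p - 1) * u n := by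
  have hp0 : 0 < p := by linarith
  have hsum : ∑ n ∈ Finset.range N, p ^ 2 * A n ^ (p - 1) * u n =
      p ^ 2 * ∑ n ∈ Finset.range N, A n ^ (p - 1) * u n := by
    simp only [Finset.mul_sum, mul_assoc]
  rw [hsum]
  set hedgeSum := ∑ n ∈ Finset.range N, A n ^ (p - 1) * u n
  have hpot : A N ^ (p - 1) * (A N - K * Z N) ≤ A N ^ (p - 1) * V N :=
    mul_le_mul_of_nonneg_left (hge N) (Real.rpow_nonneg (hA0 N) _)
  have hyoung := mul_rpow_sub_one_le hp (mul_nonneg (mul_nonneg hK hp0.le) (hZ N)) (hA0 N)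
  rw [Real.mul_rpow (by positivity) (hZ N)] at hyoung
  have hsplit : (p - 1) / p * A N ^ p = A N ^ p - A N ^ p / p := by field_simp
  have hlinear : A N ^ p / p ≤ K * Z N * A N ^ (p - 1) + hedgeSum := by
    linarith [rpow_mul_potential_le_sum hp hA0 hA hV0 hstep hVA N,
      rpow_sub_one_mul_self hp (hA0 N)]
  rw [div_le_iff₀ hp0] at hlinear
  have hself : A N ^ p / p ≤ ((K * p) ^ p * Z N ^ p) / p + p * hedgeSum := by linarith
  rw [div_le_iff₀ hp0] at hself
  calc A N ^ p ≤ (((K * p) ^ p * Z N ^ p) / p + p * hedgeSum) * p := hself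
    _ = (K * p) ^ p * Z N ^ p + p ^ 2 * hedgeSum := by field_simp

end Garsia

/-- The square function `√(∑_{k<n} (x_{k+1} - x_k)²)` of a real sequence. -/
def rootSqVar (x : ℕ → ℝ) (n : ℕ) : ℝ := √(∑ k ∈ Finset.range n, (x (k + 1) - x k) ^ 2)

/-- The running maximum `max_{k≤n} |x_k|` of a real sequence. -/
def runningMax (x : ℕ → ℝ) (n : ℕ) : ℝ := partialSups (fun k => |x k|) n

section Pathwise

variable (x : ℕ → ℝ) (n : ℕ)

lemma abs_le_runningMax : |x n| ≤ runningMax x n := le_partialSups (fun k => |x k|) n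

lemma runningMax_nonneg : 0 ≤ runningMax x n := (abs_nonneg _).trans (abs_le_runningMax x n)

lemma runningMax_mono : Monotone (runningMax x) := (partialSups fun k => |x k|).mono

lemma runningMax_zero : runningMax x 0 = |x 0| := partialSups_zero _

lemma runningMax_succ : runningMax x (n + 1) = max (runningMax x n) |x (n + 1)| :=
  partialSups_add_one _ n

lemma rootSqVar_nonneg : 0 ≤ rootSqVar x n := Real.sqrt_nonneg _

lemma rootSqVar_zero : rootSqVar x 0 = 0 := by simp [rootSqVar]

lemma sq_rootSqVar : rootSqVar x n ^ 2 = ∑ k ∈ Finset.range n, (x (k + 1) - x k) ^ 2 :=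
  Real.sq_sqrt (Finset.sum_nonneg fun _ _ => sq_nonneg _)

lemma isStateStep_succ :
    IsStateStep (x n) (x (n + 1) - x n) (rootSqVar x n) (rootSqVar x (n + 1)) (runningMax x n) :=
  ⟨rootSqVar_nonneg x n, rootSqVar_nonneg x (n + 1),
    by rw [sq_rootSqVar, sq_rootSqVar, Finset.sum_range_succ], abs_le_runningMax x n⟩

lemma rootSqVar_mono : Monotone (rootSqVar x) :=
  monotone_nat_of_le_succ fun n => (isStateStep_succ x n).le

variable {x n}

lemma eq_zero_of_rootSqVar_eq_zero (hx : x 0 = 0) (h : rootSqVar x n = 0) :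
    x n = 0 ∧ runningMax x n = 0 := by
  induction n with
  | zero => simp [runningMax_zero, hx]
  | succ n ih =>
    have hprev : rootSqVar x n = 0 :=
      le_antisymm (h ▸ rootSqVar_mono x n.le_succ) (rootSqVar_nonneg x n)
    obtain ⟨hxn, hmax⟩ := ih hprev
    have hxsucc : x (n + 1) = 0 := by
      simpa [h, hprev, hxn] using (isStateStep_succ x n).sq_eq.symm
    exact ⟨hxsucc, by simp [runningMax_succ, hmax, hxsucc]⟩

variable {p : ℝ}

lemma runningMax_rpow_le (hp : 1 ≤ p) (hx : x 0 = 0) (N : ℕ) :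
    runningMax x N ^ p ≤ (3 * p) ^ p * rootSqVar x N ^ p + ∑ n ∈ Finset.range N,
      p ^ 2 * runningMax x n ^ (p - 1) * maxHedge (x n) (rootSqVar x n) (runningMax x n) *
        (x (n + 1) - x n) := by
  have hgarsia := rpow_le_of_potential hp zero_le_three (runningMax_nonneg x) (runningMax_mono x)
    (V := fun n => maxPotential (x n) (rootSqVar x n) (runningMax x n))
    (u := fun n => maxHedge (x n) (rootSqVar x n) (runningMax x n) * (x (n + 1) - x n))
    (rootSqVar_nonneg x)
    (by simp [maxPotential, davisExcess, hx, rootSqVar_zero, runningMax_zero])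
    (fun n => by simpa only [add_sub_cancel, runningMax_succ] using
      maxPotential_step (isStateStep_succ x n) (eq_zero_of_rootSqVar_eq_zero hx))
    (fun n => by simpa only [add_sub_cancel, runningMax_succ] using
      maxPotential_le_of_step (isStateStep_succ x n))
    (fun n => sub_le_maxPotential (rootSqVar_nonneg x n)) N
  simpa only [mul_assoc] using hgarsia

lemma rootSqVar_rpow_le (hp : 1 ≤ p) (hx : x 0 = 0) (N : ℕ) :
    rootSqVar x N ^ p ≤ (3 * p) ^ p * runningMax x N ^ p + ∑ n ∈ Finset.range N,
      p ^ 2 * rootSqVar x n ^ (p - 1) * sqVarHedge (x n) (rootSqVar x n) (runningMax x n) *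
        (x (n + 1) - x n) := by
  have hgarsia := rpow_le_of_potential hp zero_le_three (rootSqVar_nonneg x) (rootSqVar_mono x)
    (V := fun n => sqVarPotential (x n) (rootSqVar x n) (runningMax x n))
    (u := fun n => sqVarHedge (x n) (rootSqVar x n) (runningMax x n) * (x (n + 1) - x n))
    (runningMax_nonneg x)
    (by simp [sqVarPotential, hx, rootSqVar_zero, runningMax_zero])
    (fun n => by simpa only [add_sub_cancel, runningMax_succ] using
      sqVarPotential_step (isStateStep_succ x n) (eq_zero_of_rootSqVar_eq_zero hx))
    (fun n => by simpa only [add_sub_cancel, runningMax_succ] using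
      sqVarPotential_le_of_step (isStateStep_succ x n))
    (fun n => sub_le_sqVarPotential (abs_le_runningMax x n)) N
  simpa only [mul_assoc] using hgarsia

end Pathwise

-- Weighted AM-GM for `p` and `p / (p - 1)` with weights `1 / p` and `(p - 1) / p`: the mean is `2`.
lemma three_mul_rpow_le {p : ℝ} (hp : 1 < p) : (3 * p) ^ p ≤ 6 ^ p * (p - 1) ^ (p - 1) := by
  have hp0 : 0 < p := by linarith
  have hq0 : 0 < p - 1 := by linarith
  have hmean : p ^ (1 / p) * (p / (p - 1)) ^ ((p - 1) / p) ≤ 2 := by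
    refine (Real.geom_mean_le_arith_mean2_weighted (by positivity) (by positivity) hp0.le
      (by positivity) (by field_simp; ring)).trans_eq ?_
    field_simp
    norm_num
  have hpow := Real.rpow_le_rpow (by positivity) hmean hp0.le
  rw [Real.mul_rpow (by positivity) (by positivity), ← Real.rpow_mul hp0.le,
    ← Real.rpow_mul (by positivity), one_div_mul_cancel hp0.ne', div_mul_cancel₀ _ hp0.ne',
    Real.rpow_one, Real.div_rpow hp0.le hq0.le, ← mul_div_assoc,
    div_le_iff₀ (Real.rpow_pos_of_pos hq0 _), mul_comm p, rpow_sub_one_mul_self hp.le hp0.le]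
    at hpow
  calc (3 * p) ^ p = 3 ^ p * p ^ p := Real.mul_rpow (by norm_num) hp0.le
    _ ≤ 3 ^ p * (2 ^ p * (p - 1) ^ (p - 1)) := by gcongr
    _ = 6 ^ p * (p - 1) ^ (p - 1) := by
      rw [← mul_assoc, ← Real.mul_rpow (by norm_num) (by norm_num)]
      norm_num

/-! ### Stopping times -/

/-- The time `a ∧ t`, the pathwise form of `stopMin`. -/
def capTime (a : ℝ≥0∞) (t : ℝ≥0) : ℝ≥0 := (min a (t : ℝ≥0∞)).toNNReal

lemma coe_capTime (a : ℝ≥0∞) (t : ℝ≥0) : (capTime a t : ℝ≥0∞) = min a t :=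
  ENNReal.coe_toNNReal (ne_top_of_le_ne_top ENNReal.coe_ne_top (min_le_right _ _))

lemma capTime_eq_right {a : ℝ≥0∞} {t : ℝ≥0} (h : (t : ℝ≥0∞) ≤ a) : capTime a t = t := by
  rw [capTime, min_eq_right h, ENNReal.toNNReal_coe]

lemma capTime_le (a : ℝ≥0∞) (t : ℝ≥0) : capTime a t ≤ t := by
  rw [← ENNReal.coe_le_coe, coe_capTime]
  exact min_le_right _ _

lemma zero_capTime (t : ℝ≥0) : capTime 0 t = 0 := by simp [capTime]

lemma capTime_zero (a : ℝ≥0∞) : capTime a 0 = 0 := by simp [capTime]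

lemma coe_capTime_eq_min (s t : ℝ≥0) : capTime (s : ℝ≥0∞) t = min s t :=
  ENNReal.coe_injective (by rw [coe_capTime, ENNReal.coe_min])

lemma capTime_capTime (a b : ℝ≥0∞) (t : ℝ≥0) :
    capTime a (capTime b t) = capTime (min a b) t :=
  ENNReal.coe_injective (by rw [coe_capTime, coe_capTime, coe_capTime, min_assoc])

variable {M : MartingaleSpace Ω}

section StoppingTimes

variable {a b : Ω → ℝ≥0∞}

protected lemma MartingaleSpace.IsStoppingTime.const (c : ℝ≥0∞) :
    M.IsStoppingTime fun _ => c := fun t => by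
  by_cases h : c ≤ t <;> simp [h]

protected lemma MartingaleSpace.IsStoppingTime.min (ha : M.IsStoppingTime a)
    (hb : M.IsStoppingTime b) : M.IsStoppingTime fun ω => min (a ω) (b ω) := fun t => by
  simpa only [min_le_iff, ofPred_or] using (ha t).union (hb t)

protected lemma MartingaleSpace.IsStoppingTime.max (ha : M.IsStoppingTime a)
    (hb : M.IsStoppingTime b) : M.IsStoppingTime fun ω => max (a ω) (b ω) := fun t => by
  simpa only [max_le_iff, ofPred_and] using (ha t).inter (hb t)

lemma MartingaleSpace.IsStoppingTime.measurableSet_le_of_le (ha : M.IsStoppingTime a) {s t : ℝ≥0}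
    (hst : s ≤ t) : MeasurableSet[M.F t] {ω | a ω ≤ (s : ℝ≥0∞)} :=
  M.mono hst _ (ha s)

lemma MartingaleSpace.IsStoppingTime.measurableSet_lt (ha : M.IsStoppingTime a)
    (hb : M.IsStoppingTime b) (t : ℝ≥0) :
    MeasurableSet[M.F t] ({ω | a ω < b ω} ∩ {ω | a ω ≤ (t : ℝ≥0∞)}) := by
  have rational_between : {ω | a ω < b ω} ∩ {ω | a ω ≤ (t : ℝ≥0∞)} =
      ({ω | a ω ≤ (t : ℝ≥0∞)} \ {ω | b ω ≤ (t : ℝ≥0∞)}) ∪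
      ⋃ q : ℚ, ⋃ _ : Real.toNNReal q ≤ t,
        ({ω | a ω ≤ (Real.toNNReal q : ℝ≥0∞)} \ {ω | b ω ≤ (Real.toNNReal q : ℝ≥0∞)}) := by
    ext ω
    simp only [mem_ofPred_eq, mem_inter_iff, mem_union, Set.mem_sdiff, mem_iUnion, not_le]
    constructor
    · rintro ⟨hlt, hat⟩
      rcases lt_or_ge (t : ℝ≥0∞) (b ω) with hbt | hbt
      · exact Or.inl ⟨hat, hbt⟩
      · obtain ⟨q, -, haq, hqb⟩ := ENNReal.lt_iff_exists_rat_btwn.1 hlt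
        exact Or.inr ⟨q, by exact_mod_cast hqb.le.trans hbt, haq.le, hqb⟩
    · rintro (⟨hat, htb⟩ | ⟨q, hqt, haq, hqb⟩)
      · exact ⟨hat.trans_lt htb, hat⟩
      · exact ⟨haq.trans_lt hqb, haq.trans (by exact_mod_cast hqt)⟩
  rw [rational_between]
  exact ((ha t).diff (hb t)).union (MeasurableSet.iUnion fun q => MeasurableSet.iUnion fun hq =>
    (ha.measurableSet_le_of_le hq).diff (hb.measurableSet_le_of_le hq))

lemma MartingaleSpace.IsStoppingTime.measurableSet_ge (ha : M.IsStoppingTime a)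
    (hb : M.IsStoppingTime b) (t : ℝ≥0) :
    MeasurableSet[M.F t] ({ω | b ω ≤ a ω} ∩ {ω | a ω ≤ (t : ℝ≥0∞)}) := by
  have : {ω | b ω ≤ a ω} ∩ {ω | a ω ≤ (t : ℝ≥0∞)}
      = {ω | a ω ≤ (t : ℝ≥0∞)} \ ({ω | a ω < b ω} ∩ {ω | a ω ≤ (t : ℝ≥0∞)}) := by
    ext ω
    simp only [mem_ofPred_eq, mem_inter_iff, Set.mem_sdiff, not_and, ← not_lt]
    tauto
  rw [this]
  exact (ha t).diff (ha.measurableSet_lt hb t)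

end StoppingTimes

/-- Measurability of `g` with respect to the stopped σ-field `F_τ`, expressed through the indicator
functions of `{τ ≤ t}` so that it is inherited by sums and products; see `isKnownAt_iff`. -/
def IsKnownAt (M : MartingaleSpace Ω) (τ : Ω → ℝ≥0∞) (g : Ω → ℝ) : Prop :=
  ∀ t : ℝ≥0, Measurable[M.F t] ({ω | τ ω ≤ (t : ℝ≥0∞)}.indicator g)

section IsKnownAt

variable {σ τ : Ω → ℝ≥0∞} {g h : Ω → ℝ}

lemma isKnownAt_iff (hτ : M.IsStoppingTime τ) : IsKnownAt M τ g ↔ M.MeasStopped τ g := by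
  classical
  have inter_eq (B : Set ℝ) (t : ℝ≥0) : {ω | g ω ∈ B ∧ τ ω ≤ (t : ℝ≥0∞)} =
      {ω | τ ω ≤ (t : ℝ≥0∞)}.indicator g ⁻¹' B ∩ {ω | τ ω ≤ (t : ℝ≥0∞)} := by
    ext ω
    by_cases hω : τ ω ≤ (t : ℝ≥0∞) <;> simp [indicator, hω]
  constructor
  · intro hg B hB t
    rw [inter_eq]
    exact (hg t hB).inter (hτ t)
  · intro hg t B hB
    have preimage_eq : {ω | τ ω ≤ (t : ℝ≥0∞)}.indicator g ⁻¹' B =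
        {ω | τ ω ≤ (t : ℝ≥0∞)}.ite {ω | g ω ∈ B ∧ τ ω ≤ (t : ℝ≥0∞)} {_ω | (0 : ℝ) ∈ B} := by
      ext ω
      by_cases hω : τ ω ≤ (t : ℝ≥0∞) <;> simp [Set.ite, indicator, hω]
    rw [preimage_eq]
    exact MeasurableSet.ite (hτ t) (hg B hB t) (MeasurableSet.const _)

lemma IsKnownAt.mul (hg : IsKnownAt M τ g) (hh : IsKnownAt M τ h) :
    IsKnownAt M τ fun ω => g ω * h ω := fun t => by
  rw [indicator_mul]
  exact (hg t).mul (hh t)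

lemma IsKnownAt.indicator {A : Set Ω} (hg : IsKnownAt M τ g)
    (hA : ∀ t : ℝ≥0, MeasurableSet[M.F t] (A ∩ {ω | τ ω ≤ (t : ℝ≥0∞)}))
    (hσ : ∀ ω ∈ A, σ ω = τ ω) : IsKnownAt M σ (A.indicator g) := fun t => by
  have : {ω | σ ω ≤ (t : ℝ≥0∞)}.indicator (A.indicator g) =
      (A ∩ {ω | τ ω ≤ (t : ℝ≥0∞)}).indicator ({ω | τ ω ≤ (t : ℝ≥0∞)}.indicator g) := by
    rw [indicator_indicator, indicator_indicator, inter_assoc, inter_self]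
    congr 1
    ext ω
    by_cases hω : ω ∈ A <;> simp [hω, hσ]
  rw [this]
  exact (hg t).indicator (hA t)

end IsKnownAt

/-! ### Integrals along time grids -/

/-- A sequence of stopping times that starts at `0` and increases to `∞` on every path. -/
structure IsTimeGrid (M : MartingaleSpace Ω) (τ : ℕ → Ω → ℝ≥0∞) : Prop where
  stopping : ∀ n, M.IsStoppingTime (τ n)
  mono : ∀ ω, Monotone fun n => τ n ω
  zero : ∀ ω, τ 0 ω = 0
  tendsto_top : ∀ ω, Tendsto (fun n => τ n ω) atTop (𝓝 ⊤)

/-- A trading strategy holding the possibly unbounded position `g n` on `[τ n, τ (n + 1)]`. -/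
structure IsStrategy (M : MartingaleSpace Ω) (τ : ℕ → Ω → ℝ≥0∞) (g : ℕ → Ω → ℝ) : Prop
    extends IsTimeGrid M τ where
  known : ∀ n, IsKnownAt M (τ n) (g n)
  eq_zero_of_top : ∀ n ω, τ n ω = ⊤ → g n ω = 0

/-- Each position is bounded, though not uniformly in `n`. -/
def IsEachBounded (g : ℕ → Ω → ℝ) : Prop := ∀ n, ∃ C : ℝ, ∀ ω, |g n ω| ≤ C

/-- The capital gained by holding the positions `g` in `X` along the grid `τ`. -/
def gridIntegral (τ : ℕ → Ω → ℝ≥0∞) (g : ℕ → Ω → ℝ) (X : ℝ≥0 → Ω → ℝ) (t : ℝ≥0) (ω : Ω) : ℝ :=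
  ∑' n : ℕ, g n ω * (X (capTime (τ (n + 1) ω) t) ω - X (capTime (τ n ω) t) ω)

lemma IsEachBounded.indicator {g : ℕ → Ω → ℝ} (hg : IsEachBounded g) (A : ℕ → Set Ω) :
    IsEachBounded fun n => (A n).indicator (g n) := fun n =>
  (hg n).imp fun _ hC ω => (norm_indicator_le_norm_self (g n) ω).trans (hC ω)

lemma IsEachBounded.mul {g h : ℕ → Ω → ℝ} (hg : IsEachBounded g) (hh : IsEachBounded h) :
    IsEachBounded fun n ω => g n ω * h n ω := by
  intro n
  obtain ⟨C, hC⟩ := hg n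
  obtain ⟨D, hD⟩ := hh n
  refine ⟨C * D, fun ω => ?_⟩
  rw [abs_mul]
  exact mul_le_mul (hC ω) (hD ω) (abs_nonneg _) ((abs_nonneg _).trans (hC ω))

section GridIntegral

variable {τ : ℕ → Ω → ℝ≥0∞} {g h : ℕ → Ω → ℝ}

lemma IsTimeGrid.exists_forall_ge (hτ : IsTimeGrid M τ) (ω : Ω) (t : ℝ≥0) :
    ∃ N, ∀ n, N ≤ n → (t : ℝ≥0∞) ≤ τ n ω :=
  eventually_atTop.1 ((hτ.tendsto_top ω).eventually (eventually_ge_nhds ENNReal.coe_lt_top))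

lemma gridIntegral_eq_sum (g : ℕ → Ω → ℝ) (X : ℝ≥0 → Ω → ℝ) {t : ℝ≥0} {ω : Ω} {N : ℕ}
    (hN : ∀ n, N ≤ n → (t : ℝ≥0∞) ≤ τ n ω) :
    gridIntegral τ g X t ω = ∑ n ∈ Finset.range N,
      g n ω * (X (capTime (τ (n + 1) ω) t) ω - X (capTime (τ n ω) t) ω) := by
  refine tsum_eq_sum fun n hn => ?_
  have hNn : N ≤ n := by simpa using hn
  rw [capTime_eq_right (hN n hNn), capTime_eq_right (hN (n + 1) (by omega)), sub_self, mul_zero]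

lemma gridIntegral_zero (τ : ℕ → Ω → ℝ≥0∞) (g : ℕ → Ω → ℝ) (X : ℝ≥0 → Ω → ℝ) (ω : Ω) :
    gridIntegral τ g X 0 ω = 0 := by
  simp [gridIntegral, capTime_zero]

lemma IsTimeGrid.gridIntegral_sum (hτ : IsTimeGrid M τ) (g : ℕ → Ω → ℝ) {ι : Type*} (s : Finset ι)
    (X : ι → ℝ≥0 → Ω → ℝ) (t : ℝ≥0) (ω : Ω) :
    gridIntegral τ g (fun t ω => ∑ i ∈ s, X i t ω) t ω = ∑ i ∈ s, gridIntegral τ g (X i) t ω := by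
  obtain ⟨N, hN⟩ := hτ.exists_forall_ge ω t
  simp_rw [gridIntegral_eq_sum _ _ hN]
  rw [Finset.sum_comm]
  refine Finset.sum_congr rfl fun n _ => ?_
  rw [← Finset.mul_sum, Finset.sum_sub_distrib]

lemma gridIntegral_const_add (g : ℕ → Ω → ℝ) (c : ℝ) (X : ℝ≥0 → Ω → ℝ) :
    gridIntegral τ g (fun t ω => c + X t ω) = gridIntegral τ g X := by
  ext t ω
  simp only [gridIntegral, add_sub_add_left_eq_sub]

lemma IsTimeGrid.gridIntegral_capTime (hτ : IsTimeGrid M τ) (h : ℕ → Ω → ℝ) (X : ℝ≥0 → Ω → ℝ)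
    (t : ℝ≥0) (ω : Ω) (n : ℕ) : gridIntegral τ h X (capTime (τ n ω) t) ω = ∑ k ∈ Finset.range n,
      h k ω * (X (capTime (τ (k + 1) ω) t) ω - X (capTime (τ k ω) t) ω) := by
  rw [gridIntegral_eq_sum h X (N := n)]
  · refine Finset.sum_congr rfl fun k hk => ?_
    have hkn := Finset.mem_range.1 hk
    rw [capTime_capTime, capTime_capTime, min_eq_left (hτ.mono ω (show k + 1 ≤ n from hkn)),
      min_eq_left (hτ.mono ω hkn.le)]
  · intro k hk
    rw [coe_capTime]
    exact (min_le_left _ _).trans (hτ.mono ω hk)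

lemma IsTimeGrid.gridIntegral_gridIntegral (hτ : IsTimeGrid M τ) (g h : ℕ → Ω → ℝ)
    (X : ℝ≥0 → Ω → ℝ) (t : ℝ≥0) (ω : Ω) :
    gridIntegral τ g (gridIntegral τ h X) t ω =
      gridIntegral τ (fun n ω => g n ω * h n ω) X t ω := by
  obtain ⟨N, hN⟩ := hτ.exists_forall_ge ω t
  rw [gridIntegral_eq_sum _ _ hN, gridIntegral_eq_sum _ _ hN]
  refine Finset.sum_congr rfl fun n _ => ?_
  rw [hτ.gridIntegral_capTime, hτ.gridIntegral_capTime, Finset.sum_range_succ]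
  ring

lemma IsStrategy.mul (hg : IsStrategy M τ g) (hh : IsStrategy M τ h) :
    IsStrategy M τ fun n ω => g n ω * h n ω where
  toIsTimeGrid := hg.toIsTimeGrid
  known n := (hg.known n).mul (hh.known n)
  eq_zero_of_top n ω hn := by rw [hg.eq_zero_of_top n ω hn, zero_mul]

lemma isStrategy_zero : IsStrategy M (fun n _ => (n : ℝ≥0∞)) (fun _ _ => 0) where
  stopping n := .const _
  mono _ := Nat.mono_cast
  zero _ := Nat.cast_zero
  tendsto_top _ := ENNReal.tendsto_nat_nhds_top
  known n t := by simp
  eq_zero_of_top _ _ _ := rfl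

end GridIntegral

section Stopping

variable {τ : ℕ → Ω → ℝ≥0∞} {σ : Ω → ℝ≥0∞} {g : ℕ → Ω → ℝ}

/-- A grid through `σ`: on `{τ n < σ}` its `(n + 1)`-st time is `τ (n + 1) ∧ σ`. Afterwards it falls
behind `τ` by one index, so that it still increases to `∞`. -/
def stopGrid (τ : ℕ → Ω → ℝ≥0∞) (σ : Ω → ℝ≥0∞) : ℕ → Ω → ℝ≥0∞
  | 0, _ => 0
  | n + 1, ω => max (min (τ (n + 1) ω) (σ ω)) (τ n ω)

/-- The positions `g` abandoned from time `σ` on, along `stopGrid τ σ`. -/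
def stopPosition (τ : ℕ → Ω → ℝ≥0∞) (σ : Ω → ℝ≥0∞) (g : ℕ → Ω → ℝ) (n : ℕ) : Ω → ℝ :=
  {ω | τ n ω < σ ω}.indicator (g n)

lemma IsTimeGrid.stopGrid_eq_of_lt (hτ : IsTimeGrid M τ) {n : ℕ} {ω : Ω} (hlt : τ n ω < σ ω) :
    stopGrid τ σ n ω = τ n ω := by
  cases n with
  | zero => exact (hτ.zero ω).symm
  | succ n => rw [stopGrid, min_eq_left hlt.le, max_eq_left (hτ.mono ω n.le_succ)]

lemma IsTimeGrid.stopGrid (hτ : IsTimeGrid M τ) (hσ : M.IsStoppingTime σ) :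
    IsTimeGrid M (stopGrid τ σ) where
  stopping n := by
    cases n with
    | zero => exact .const 0
    | succ n => exact ((hτ.stopping _).min hσ).max (hτ.stopping _)
  mono ω := by
    refine monotone_nat_of_le_succ fun n => ?_
    cases n with
    | zero => exact zero_le
    | succ n =>
      exact max_le ((min_le_left _ _).trans (le_max_right _ _))
        ((hτ.mono ω n.le_succ).trans (le_max_right _ _))
  zero _ := rfl
  tendsto_top ω := (tendsto_add_atTop_iff_nat 1).1 <|
    tendsto_nhds_top_mono (hτ.tendsto_top ω) (.of_forall fun _ => le_max_right _ _)

lemma IsStrategy.stopped (hg : IsStrategy M τ g) (hσ : M.IsStoppingTime σ) :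
    IsStrategy M (stopGrid τ σ) (stopPosition τ σ g) where
  toIsTimeGrid := hg.toIsTimeGrid.stopGrid hσ
  known n := (hg.known n).indicator ((hg.stopping n).measurableSet_lt hσ)
    fun _ hω => hg.stopGrid_eq_of_lt hω
  eq_zero_of_top n ω hn := by
    refine indicator_apply_eq_zero.2 fun hω => hg.eq_zero_of_top n ω ?_
    rw [← hg.stopGrid_eq_of_lt hω, hn]

lemma IsTimeGrid.gridIntegral_stopGrid (hτ : IsTimeGrid M τ) (g : ℕ → Ω → ℝ) (X : ℝ≥0 → Ω → ℝ)
    (t : ℝ≥0) (ω : Ω) : gridIntegral (ModelFreeBDG.stopGrid τ σ) (stopPosition τ σ g) X t ω =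
      gridIntegral τ g X (capTime (σ ω) t) ω := by
  unfold gridIntegral stopPosition
  congr 1
  ext n
  have hmono := hτ.mono ω n.le_succ
  rw [capTime_capTime, capTime_capTime]
  rcases lt_or_ge (τ n ω) (σ ω) with hlt | hge
  · have hnext : ModelFreeBDG.stopGrid τ σ (n + 1) ω = min (τ (n + 1) ω) (σ ω) :=
      max_eq_left (le_min hmono hlt.le)
    rw [indicator_of_mem (s := {ω | τ n ω < σ ω}) hlt, hτ.stopGrid_eq_of_lt hlt, hnext,
      min_eq_left hlt.le]
  · rw [indicator_of_notMem (s := {ω | τ n ω < σ ω}) (not_lt.2 hge), min_eq_right hge,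
      min_eq_right (hge.trans hmono), sub_self, mul_zero, zero_mul]

end Stopping

section Normalization

variable (T : ProperSeq M) {g : ℕ → Ω → ℝ}

/-- The event that the sequence still moves after its `n`-th time. -/
def ProperSeq.movesAfter (n : ℕ) : Set Ω := {ω | ∃ m, T.τ n ω < T.τ m ω}

open Classical in
/-- The sequence with all the times after it has become constant moved to `∞`. -/
def ProperSeq.toGrid : ℕ → Ω → ℝ≥0∞
  | 0, _ => 0
  | n + 1, ω => if ω ∈ T.movesAfter n then T.τ (n + 1) ω else ⊤

lemma ProperSeq.movesAfter_antitone : Antitone T.movesAfter := fun _ _ hnk _ ⟨m, hm⟩ =>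
  ⟨m, (T.mono _ hnk).trans_lt hm⟩

lemma ProperSeq.measurableSet_movesAfter (n : ℕ) (t : ℝ≥0) :
    MeasurableSet[M.F t] (T.movesAfter n ∩ {ω | T.τ n ω ≤ (t : ℝ≥0∞)}) := by
  have : T.movesAfter n ∩ {ω | T.τ n ω ≤ (t : ℝ≥0∞)} =
      ⋃ m, {ω | T.τ n ω < T.τ m ω} ∩ {ω | T.τ n ω ≤ (t : ℝ≥0∞)} := by
    rw [← iUnion_inter]
    congr 1
    ext ω
    simp [movesAfter]
  rw [this]
  exact MeasurableSet.iUnion fun m => (T.stopping n).measurableSet_lt (T.stopping m) t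

variable {T}

lemma ProperSeq.toGrid_eq {n : ℕ} {ω : Ω} (h : ω ∈ T.movesAfter n) : T.toGrid n ω = T.τ n ω := by
  cases n with
  | zero => exact (T.zero ω).symm
  | succ n => exact if_pos (T.movesAfter_antitone n.le_succ h)

variable (T)

lemma ProperSeq.tendsto_toGrid (ω : Ω) : Tendsto (fun n => T.toGrid n ω) atTop (𝓝 ⊤) := by
  by_cases hmoves : ∀ n, ω ∈ T.movesAfter n
  · refine Tendsto.congr (fun n => (toGrid_eq (hmoves n)).symm) ?_
    refine (T.proper ω).resolve_right ?_
    rintro ⟨n, hconst⟩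
    obtain ⟨m, hm⟩ := hmoves n
    rcases le_total n m with hnm | hmn
    · exact hm.ne' (hconst m hnm)
    · exact hm.not_ge (T.mono ω hmn)
  · obtain ⟨n, hn⟩ := not_forall.1 hmoves
    refine tendsto_const_nhds.congr' ?_
    filter_upwards [eventually_ge_atTop (n + 1)] with m hm
    obtain ⟨k, rfl⟩ := Nat.exists_eq_add_of_le' hm
    exact (if_neg fun h => hn (T.movesAfter_antitone (Nat.le_add_left n k) h)).symm

lemma ProperSeq.isTimeGrid_toGrid : IsTimeGrid M T.toGrid where
  stopping n := by
    cases n with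
    | zero => exact .const 0
    | succ n =>
      intro t
      have : {ω | T.toGrid (n + 1) ω ≤ (t : ℝ≥0∞)} =
          (T.movesAfter n ∩ {ω | T.τ n ω ≤ (t : ℝ≥0∞)}) ∩ {ω | T.τ (n + 1) ω ≤ (t : ℝ≥0∞)} := by
        ext ω
        have hmono : T.τ n ω ≤ T.τ (n + 1) ω := T.mono ω n.le_succ
        by_cases h : ω ∈ T.movesAfter n
        · simpa [toGrid, h] using hmono.trans
        · simp [toGrid, h]
      rw [this]
      exact (T.measurableSet_movesAfter n t).inter (T.stopping _ t)
  mono ω := by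
    refine monotone_nat_of_le_succ fun n => ?_
    by_cases h : ω ∈ T.movesAfter n
    · rw [toGrid_eq h, toGrid, if_pos h]
      exact T.mono ω n.le_succ
    · rw [toGrid, if_neg h]
      exact le_top
  zero _ := rfl
  tendsto_top := T.tendsto_toGrid

lemma ProperSeq.isStrategy_toGrid (hg : ∀ n, M.MeasStopped (T.τ n) (g n))
    (hg_top : ∀ n ω, T.τ n ω = ⊤ → g n ω = 0) :
    IsStrategy M T.toGrid fun n => (T.movesAfter n).indicator (g n) where
  toIsTimeGrid := T.isTimeGrid_toGrid
  known n := ((isKnownAt_iff (T.stopping n)).2 (hg n)).indicator (T.measurableSet_movesAfter n)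
    fun _ => toGrid_eq
  eq_zero_of_top n ω hn :=
    indicator_apply_eq_zero.2 fun hω => hg_top n ω (by rw [← toGrid_eq hω, hn])

lemma ProperSeq.gridIntegral_toGrid (g : ℕ → Ω → ℝ) (X : ℝ≥0 → Ω → ℝ) (t : ℝ≥0) (ω : Ω) :
    gridIntegral T.toGrid (fun n => (T.movesAfter n).indicator (g n)) X t ω =
      gridIntegral T.τ g X t ω := by
  unfold gridIntegral
  congr 1
  ext n
  beta_reduce
  by_cases h : ω ∈ T.movesAfter n
  · rw [indicator_of_mem h, toGrid_eq h, toGrid, if_pos h]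
  · have hconst : T.τ (n + 1) ω = T.τ n ω :=
      le_antisymm (not_lt.1 fun hlt => h ⟨_, hlt⟩) (T.mono ω n.le_succ)
    rw [indicator_of_notMem h, hconst, sub_self, mul_zero, zero_mul]

end Normalization

section Refinement

variable {σ τ ρ : ℕ → Ω → ℝ≥0∞} {g h : ℕ → Ω → ℝ}

/-- `ρ` is a grid that contains every time of `τ`, visited no earlier than in `τ`. -/
structure IsRefinement (M : MartingaleSpace Ω) (ρ τ : ℕ → Ω → ℝ≥0∞) : Prop
    extends IsTimeGrid M ρ where
  le_or_le : ∀ ω n i, τ i ω ≤ ρ n ω ∨ ρ (n + 1) ω ≤ τ i ω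
  le : ∀ ω n, ρ n ω ≤ τ n ω

open Classical in
/-- The positions along a refinement `ρ` of `τ` that reproduce the positions `g` along `τ`. -/
def refinePosition (τ ρ : ℕ → Ω → ℝ≥0∞) (g : ℕ → Ω → ℝ) (n : ℕ) (ω : Ω) : ℝ :=
  ∑ i ∈ Finset.range (n + 1), if τ i ω ≤ ρ n ω ∧ ρ n ω < τ (i + 1) ω then g i ω else 0

lemma sum_ite_sub_capTime (f : ℝ≥0 → ℝ) {ρ : ℕ → ℝ≥0∞} {a b : ℝ≥0∞} {t : ℝ≥0} {N : ℕ}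
    (hab : a ≤ b) (h0 : ρ 0 = 0) (hmono : Monotone ρ) (hN : (t : ℝ≥0∞) ≤ ρ N)
    (ha : ∀ n, a ≤ ρ n ∨ ρ (n + 1) ≤ a) (hb : ∀ n, b ≤ ρ n ∨ ρ (n + 1) ≤ b) :
    ∑ n ∈ Finset.range N,
      (if a ≤ ρ n ∧ ρ n < b then f (capTime (ρ (n + 1)) t) - f (capTime (ρ n) t) else 0)
      = f (capTime b t) - f (capTime a t) := by
  let clamped : ℕ → ℝ := fun n => f (capTime (max a (min (ρ n) b)) t)
  have term_eq (n : ℕ) :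
      (if a ≤ ρ n ∧ ρ n < b then f (capTime (ρ (n + 1)) t) - f (capTime (ρ n) t) else 0)
        = clamped (n + 1) - clamped n := by
    have hstep : ρ n ≤ ρ (n + 1) := hmono n.le_succ
    simp only [clamped]
    split_ifs with hin
    · have hnext := (hb n).resolve_left (not_le.2 hin.2)
      rw [min_eq_left hnext, min_eq_left hin.2.le, max_eq_right hin.1,
        max_eq_right (hin.1.trans hstep)]
    · rcases ha n with hafter | hbefore
      · have hbn : b ≤ ρ n := not_lt.1 fun hlt => hin ⟨hafter, hlt⟩
        rw [min_eq_right hbn, min_eq_right (hbn.trans hstep), sub_self]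
      · rw [max_eq_left ((min_le_left _ _).trans hbefore),
          max_eq_left ((min_le_left _ _).trans (hstep.trans hbefore)), sub_self]
  have first_eq : clamped 0 = f (capTime a t) := by
    simp only [clamped]
    rw [h0, min_eq_left zero_le, max_eq_left zero_le]
  have last_eq : clamped N = f (capTime b t) := by
    simp only [clamped]
    rcases le_total b (ρ N) with hbN | hNb
    · rw [min_eq_right hbN, max_eq_right hab]
    · rw [min_eq_left hNb, capTime_eq_right (hN.trans (le_max_right _ _)),
        capTime_eq_right (hN.trans hNb)]
  rw [Finset.sum_congr rfl fun n _ => term_eq n, Finset.sum_range_sub, first_eq, last_eq]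

lemma IsRefinement.isStrategy (hρ : IsRefinement M ρ τ) (hg : IsStrategy M τ g) :
    IsStrategy M ρ (refinePosition τ ρ g) where
  toIsTimeGrid := hρ.toIsTimeGrid
  known n t := by
    have : {ω | ρ n ω ≤ (t : ℝ≥0∞)}.indicator (refinePosition τ ρ g n) = fun ω =>
        ∑ i ∈ Finset.range (n + 1),
          (({ω | τ i ω ≤ ρ n ω} ∩ {ω | ρ n ω ≤ (t : ℝ≥0∞)}) ∩
            ({ω | ρ n ω < τ (i + 1) ω} ∩ {ω | ρ n ω ≤ (t : ℝ≥0∞)})).indicator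
            ({ω | τ i ω ≤ (t : ℝ≥0∞)}.indicator (g i)) ω := by
      ext ω
      by_cases hle : ρ n ω ≤ (t : ℝ≥0∞)
      · simp only [indicator, mem_ofPred_eq, hle, if_true, refinePosition, mem_inter_iff, and_true]
        refine Finset.sum_congr rfl fun i _ => ?_
        split_ifs with hin hi
        · rfl
        · exact absurd (hin.1.trans hle) hi
        · rfl
      · simp [indicator, hle]
    rw [this]
    exact Finset.measurable_sum _ fun i _ => (hg.known i t).indicator
      (((hρ.stopping n).measurableSet_ge (hg.stopping i) t).inter
        ((hρ.stopping n).measurableSet_lt (hg.stopping (i + 1)) t))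
  eq_zero_of_top n ω hn := Finset.sum_eq_zero fun i _ => by simp [hn]

lemma IsEachBounded.refinePosition (hg : IsEachBounded g) (τ ρ : ℕ → Ω → ℝ≥0∞) :
    IsEachBounded (refinePosition τ ρ g) := by
  choose C hC using hg
  refine fun n => ⟨∑ i ∈ Finset.range (n + 1), |C i|, fun ω => ?_⟩
  refine (Finset.abs_sum_le_sum_abs _ _).trans (Finset.sum_le_sum fun i _ => ?_)
  split_ifs
  · exact (hC i ω).trans (le_abs_self _)
  · simp

lemma IsRefinement.gridIntegral_refinePosition (hρ : IsRefinement M ρ τ) (hτ : IsTimeGrid M τ)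
    (g : ℕ → Ω → ℝ) (X : ℝ≥0 → Ω → ℝ) (t : ℝ≥0) (ω : Ω) :
    gridIntegral ρ (refinePosition τ ρ g) X t ω = gridIntegral τ g X t ω := by
  classical
  obtain ⟨N₁, hN₁⟩ := hτ.exists_forall_ge ω t
  obtain ⟨N₂, hN₂⟩ := hρ.exists_forall_ge ω t
  let N := max N₁ N₂
  have increment_eq (i : ℕ) : X (capTime (τ (i + 1) ω) t) ω - X (capTime (τ i ω) t) ω =
      ∑ n ∈ Finset.range N, (if τ i ω ≤ ρ n ω ∧ ρ n ω < τ (i + 1) ω then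
        X (capTime (ρ (n + 1) ω) t) ω - X (capTime (ρ n ω) t) ω else 0) :=
    (sum_ite_sub_capTime (fun s => X s ω) (hτ.mono ω i.le_succ) (hρ.zero ω) (hρ.mono ω)
      (hN₂ N (le_max_right _ _)) (fun n => hρ.le_or_le ω n i)
      fun n => hρ.le_or_le ω n (i + 1)).symm
  rw [gridIntegral_eq_sum g X (N := N) fun n hn => hN₁ n ((le_max_left _ _).trans hn),
    gridIntegral_eq_sum _ X (N := N) fun n hn => hN₂ n ((le_max_right _ _).trans hn)]
  simp_rw [increment_eq, Finset.mul_sum]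
  rw [Finset.sum_comm]
  refine Finset.sum_congr rfl fun n hn => ?_
  rw [refinePosition, Finset.sum_mul, Finset.sum_subset
    (Finset.range_mono (show n + 1 ≤ N from Finset.mem_range.1 hn))]
  · exact Finset.sum_congr rfl fun i _ => by rw [ite_mul, mul_ite, zero_mul, mul_zero]
  · intro i _ hi
    have hni : n + 1 ≤ i := by simpa using hi
    split_ifs with hin
    · have hconst : ρ (n + 1) ω = ρ n ω := le_antisymm
        ((hρ.le ω (n + 1)).trans ((hτ.mono ω hni).trans hin.1)) (hρ.mono ω n.le_succ)
      rw [hconst, sub_self, mul_zero]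
    · exact zero_mul _

/-- The `n`-th time of the sorted union of the grids `σ` and `τ`: at least `i + j = n` of their
times have passed once `σ i` and `τ j` have. -/
def mergeGrid (σ τ : ℕ → Ω → ℝ≥0∞) (n : ℕ) (ω : Ω) : ℝ≥0∞ :=
  (Finset.HasAntidiagonal.antidiagonal n).inf fun ij => max (σ ij.1 ω) (τ ij.2 ω)

lemma mergeGrid_le (σ τ : ℕ → Ω → ℝ≥0∞) (i j : ℕ) (ω : Ω) :
    mergeGrid σ τ (i + j) ω ≤ max (σ i ω) (τ j ω) :=
  Finset.inf_le (f := fun ij : ℕ × ℕ => max (σ ij.1 ω) (τ ij.2 ω)) (b := (i, j)) (by simp)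

lemma le_mergeGrid {n : ℕ} {ω : Ω} {c : ℝ≥0∞}
    (h : ∀ i j, i + j = n → c ≤ max (σ i ω) (τ j ω)) : c ≤ mergeGrid σ τ n ω :=
  Finset.le_inf fun ij hij => h ij.1 ij.2 (Finset.HasAntidiagonal.mem_antidiagonal.1 hij)

lemma mergeGrid_comm (σ τ : ℕ → Ω → ℝ≥0∞) : mergeGrid σ τ = mergeGrid τ σ := by
  have le_swap (σ τ : ℕ → Ω → ℝ≥0∞) (n : ℕ) (ω : Ω) : mergeGrid σ τ n ω ≤ mergeGrid τ σ n ω := by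
    refine le_mergeGrid fun i j hij => ?_
    rw [← hij, add_comm, max_comm]
    exact mergeGrid_le σ τ j i ω
  ext n ω
  exact le_antisymm (le_swap σ τ n ω) (le_swap τ σ n ω)

lemma IsTimeGrid.mergeGrid (hσ : IsTimeGrid M σ) (hτ : IsTimeGrid M τ) :
    IsTimeGrid M (mergeGrid σ τ) where
  stopping n t := by
    have : {ω | ModelFreeBDG.mergeGrid σ τ n ω ≤ (t : ℝ≥0∞)} =
        ⋃ ij ∈ Finset.HasAntidiagonal.antidiagonal n,
          {ω | max (σ ij.1 ω) (τ ij.2 ω) ≤ (t : ℝ≥0∞)} := by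
      ext ω
      simp only [mem_ofPred_eq, ModelFreeBDG.mergeGrid, mem_iUnion,
        Finset.inf_le_iff ENNReal.coe_lt_top, exists_prop]
    rw [this]
    exact Finset.measurableSet_biUnion _ fun ij _ =>
      (hσ.stopping ij.1).max (hτ.stopping ij.2) t
  mono ω := by
    refine monotone_nat_of_le_succ fun n => le_mergeGrid fun i j hij => ?_
    cases j with
    | zero =>
      obtain rfl : i = n + 1 := hij
      exact (mergeGrid_le σ τ n 0 ω).trans (max_le_max (hσ.mono ω n.le_succ) le_rfl)
    | succ j =>
      obtain rfl : n = i + j := by omega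
      exact (mergeGrid_le σ τ i j ω).trans (max_le_max le_rfl (hτ.mono ω j.le_succ))
  zero ω := by simp [ModelFreeBDG.mergeGrid, hσ.zero, hτ.zero]
  tendsto_top ω := by
    rw [ENNReal.tendsto_nhds_top_iff_nnreal]
    intro x
    obtain ⟨I, hI⟩ := hσ.exists_forall_ge ω (x + 1)
    obtain ⟨J, hJ⟩ := hτ.exists_forall_ge ω (x + 1)
    filter_upwards [eventually_ge_atTop (I + J)] with n hn
    have hx : (x : ℝ≥0∞) < ((x + 1 : ℝ≥0) : ℝ≥0∞) := by exact_mod_cast lt_add_one x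
    refine hx.trans_le (le_mergeGrid fun i j hij => ?_)
    rcases le_or_gt I i with hi | hi
    · exact (hI i hi).trans (le_max_left _ _)
    · exact (hJ j (by omega)).trans (le_max_right _ _)

lemma IsTimeGrid.mergeGrid_isRefinement_left (hσ : IsTimeGrid M σ) (hτ : IsTimeGrid M τ) :
    IsRefinement M (ModelFreeBDG.mergeGrid σ τ) σ where
  toIsTimeGrid := hσ.mergeGrid hτ
  le_or_le ω n k := by
    refine or_iff_not_imp_left.2 fun hlt => ?_
    obtain ⟨⟨i, j⟩, hij, hmax⟩ := Finset.inf_lt_iff.1 (not_le.1 hlt)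
    obtain ⟨hi, hj⟩ := max_lt_iff.1 hmax
    obtain rfl : i + j = n := Finset.HasAntidiagonal.mem_antidiagonal.1 hij
    have hik : i + 1 ≤ k := by
      by_contra! hk
      exact hi.not_ge (hσ.mono ω (show k ≤ i by omega))
    rw [add_right_comm]
    exact (mergeGrid_le σ τ (i + 1) j ω).trans (max_le (hσ.mono ω hik) hj.le)
  le ω n := (mergeGrid_le σ τ n 0 ω).trans (by simp [hτ.zero])

lemma IsTimeGrid.mergeGrid_isRefinement_right (hσ : IsTimeGrid M σ) (hτ : IsTimeGrid M τ) :
    IsRefinement M (ModelFreeBDG.mergeGrid σ τ) τ := by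
  rw [mergeGrid_comm]
  exact hτ.mergeGrid_isRefinement_left hσ

end Refinement

/-! ### Simple capital processes -/

section SimpleCapital

variable {Y : ℝ≥0 → Ω → ℝ}

/-- The simple trading strategy with initial capital `c` and bounded positions `g` along `τ`. -/
def IsStrategy.toSimpleStrategy {τ : ℕ → Ω → ℝ≥0∞} {g : ℕ → Ω → ℝ} (hg : IsStrategy M τ g)
    (hb : IsEachBounded g) (c : ℝ) : SimpleStrategy M where
  c := c
  τ := ⟨τ, hg.stopping, hg.mono, hg.zero, fun ω => Or.inl (hg.tendsto_top ω)⟩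
  g := g
  g_bdd := hb
  g_meas n := (isKnownAt_iff (hg.stopping n)).1 (hg.known n)
  g_top := hg.eq_zero_of_top

lemma isSimpleCapital_iff : IsSimpleCapital M Y ↔
    ∃ (c : Fin M.d → ℝ) (τ : Fin M.d → ℕ → Ω → ℝ≥0∞) (g : Fin M.d → ℕ → Ω → ℝ),
      (∀ j, IsStrategy M (τ j) (g j)) ∧ (∀ j, IsEachBounded (g j)) ∧
      ∀ t ω, Y t ω = ∑ j, (c j + gridIntegral (τ j) (g j) (M.S j) t ω) := by
  constructor
  · rintro ⟨G, hY⟩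
    refine ⟨fun j => (G j).c, fun j => (G j).τ.toGrid, _,
      fun j => (G j).τ.isStrategy_toGrid (G j).g_meas (G j).g_top,
      fun j => IsEachBounded.indicator (G j).g_bdd _, fun t ω => ?_⟩
    rw [hY]
    exact Finset.sum_congr rfl fun j _ => by rw [ProperSeq.gridIntegral_toGrid]; rfl
  · rintro ⟨c, τ, g, hg, hb, hY⟩
    exact ⟨fun j => (hg j).toSimpleStrategy (hb j) (c j), hY⟩

lemma IsSimpleCapital.const (hd : 0 < M.d) (c : ℝ) : IsSimpleCapital M fun _ _ => c :=
  isSimpleCapital_iff.2 ⟨fun j => if j = ⟨0, hd⟩ then c else 0, fun _ => _, fun _ => _,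
    fun _ => isStrategy_zero, fun _ _ => ⟨0, fun _ => by simp⟩, fun t ω => by simp [gridIntegral]⟩

lemma isSimpleCapital_zero : IsSimpleCapital M fun _ _ => 0 :=
  isSimpleCapital_iff.2 ⟨0, fun _ => _, fun _ => _, fun _ => isStrategy_zero,
    fun _ _ => ⟨0, fun _ => by simp⟩, fun t ω => by simp [gridIntegral]⟩

lemma IsSimpleCapital.const_mul (hY : IsSimpleCapital M Y) (a : ℝ) :
    IsSimpleCapital M fun t ω => a * Y t ω := by
  obtain ⟨G, hY⟩ := hY
  refine ⟨fun j =>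
    { c := a * (G j).c
      τ := (G j).τ
      g := fun n ω => a * (G j).g n ω
      g_bdd := fun n => ((G j).g_bdd n).elim fun C hC => ⟨|a| * C, fun ω => by
        rw [abs_mul]; exact mul_le_mul_of_nonneg_left (hC ω) (abs_nonneg a)⟩
      g_meas := fun n B hB t => (G j).g_meas n _ (measurable_const_mul a hB) t
      g_top := fun n ω hn => by rw [(G j).g_top n ω hn, mul_zero] }, fun t ω => ?_⟩
  simp only [hY, SimpleStrategy.integral, Finset.mul_sum, mul_add, ← tsum_mul_left, mul_assoc]

lemma IsSimpleCapital.stopped (hY : IsSimpleCapital M Y) {σ : Ω → ℝ≥0∞} (hσ : M.IsStoppingTime σ) :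
    IsSimpleCapital M fun t ω => Y (capTime (σ ω) t) ω := by
  obtain ⟨c, τ, g, hg, hb, hY⟩ := isSimpleCapital_iff.1 hY
  refine isSimpleCapital_iff.2 ⟨c, _, _, fun j => (hg j).stopped hσ,
    fun j => (hb j).indicator _, fun t ω => ?_⟩
  simp_rw [hY, (hg _).gridIntegral_stopGrid]

lemma IsSimpleCapital.gridIntegral (hY : IsSimpleCapital M Y) {τ : ℕ → Ω → ℝ≥0∞} {h : ℕ → Ω → ℝ}
    (hh : IsStrategy M τ h) (hb : IsEachBounded h) : IsSimpleCapital M (gridIntegral τ h Y) := by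
  obtain ⟨c, σ, g, hg, hgb, hY⟩ := isSimpleCapital_iff.1 hY
  have left j := (hg j).mergeGrid_isRefinement_left hh.toIsTimeGrid
  have right j := (hg j).mergeGrid_isRefinement_right hh.toIsTimeGrid
  refine isSimpleCapital_iff.2 ⟨0, fun j => mergeGrid (σ j) τ, _,
    fun j => ((right j).isStrategy hh).mul ((left j).isStrategy (hg j)),
    fun j => (hb.refinePosition _ _).mul ((hgb j).refinePosition _ _), fun t ω => ?_⟩
  have Y_eq : Y = fun t ω => ∑ j,
      (c j + ModelFreeBDG.gridIntegral (mergeGrid (σ j) τ)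
        (refinePosition (σ j) (mergeGrid (σ j) τ) (g j)) (M.S j) t ω) := by
    ext t ω
    simp_rw [hY, fun j => (left j).gridIntegral_refinePosition (hg j).toIsTimeGrid]
  rw [Y_eq, hh.gridIntegral_sum]
  refine Finset.sum_congr rfl fun j _ => ?_
  rw [gridIntegral_const_add, ← (right j).gridIntegral_refinePosition hh.toIsTimeGrid,
    (left j).gridIntegral_gridIntegral, Pi.zero_apply, zero_add]

end SimpleCapital

/-! ### Nonnegative supermartingales and instant enforcement -/

section Supermartingale

variable {Z Z' : ℝ≥0 → Ω → EReal}

lemma IsNonnegSupermart.nonneg (hZ : IsNonnegSupermart M Z) (t : ℝ≥0) (ω : Ω) : 0 ≤ Z t ω := by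
  induction hZ with
  | simple _ _ hpos => exact EReal.coe_nonneg.2 (hpos t ω)
  | add _ _ _ _ hpos => exact hpos t ω
  | liminf _ _ ih => exact le_liminf_of_le (by isBoundedDefault) (Eventually.of_forall ih)

lemma IsNonnegSupermart.ne_bot (hZ : IsNonnegSupermart M Z) (t : ℝ≥0) (ω : Ω) : Z t ω ≠ ⊥ :=
  (EReal.bot_lt_zero.trans_le (hZ.nonneg t ω)).ne'

lemma isNonnegSupermart_zero : IsNonnegSupermart M fun _ _ => 0 :=
  .simple _ isSimpleCapital_zero fun _ _ => le_rfl

lemma isNonnegSupermart_const (hd : 0 < M.d) {c : ℝ} (hc : 0 ≤ c) :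
    IsNonnegSupermart M fun _ _ => (c : EReal) :=
  .simple _ (.const hd c) fun _ _ => hc

lemma add_liminf_of_nonneg {a : EReal} (ha : 0 ≤ a) {u : ℕ → EReal} (hu : ∀ n, 0 ≤ u n) :
    a + liminf u atTop = liminf (fun n => a + u n) atTop := by
  have liminf_nonneg : 0 ≤ liminf u atTop :=
    le_liminf_of_le (by isBoundedDefault) (Eventually.of_forall hu)
  have add_continuousAt : ContinuousAt (fun x : EReal => a + x) (liminf u atTop) :=
    ContinuousAt.comp (f := fun x => (a, x)) (g := fun p : EReal × EReal => p.1 + p.2)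
      (EReal.continuousAt_add (.inr (EReal.bot_lt_zero.trans_le liminf_nonneg).ne')
        (.inl (EReal.bot_lt_zero.trans_le ha).ne')) (by fun_prop)
  exact Monotone.map_liminf_of_continuousAt (fun x y hxy => add_le_add_right hxy a) u
    add_continuousAt

lemma IsNonnegSupermart.add_supermart (hZ : IsNonnegSupermart M Z) (hZ' : IsNonnegSupermart M Z') :
    IsNonnegSupermart M fun t ω => Z t ω + Z' t ω := by
  induction hZ' with
  | simple X hX hpos =>
    exact .add Z X hZ hX fun t ω => add_nonneg (hZ.nonneg t ω) (EReal.coe_nonneg.2 (hpos t ω))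
  | add X Y _ hY hpos ih =>
    simpa only [add_assoc] using IsNonnegSupermart.add _ Y ih hY fun t ω => by
      rw [add_assoc]; exact add_nonneg (hZ.nonneg t ω) (hpos t ω)
  | liminf Xs hXs ih =>
    simpa only [add_liminf_of_nonneg (hZ.nonneg _ _) fun n => (hXs n).nonneg _ _] using
      IsNonnegSupermart.liminf _ ih

lemma IsNonnegSupermart.sum {Zs : ℕ → ℝ≥0 → Ω → EReal} (hZs : ∀ n, IsNonnegSupermart M (Zs n))
    (n : ℕ) : IsNonnegSupermart M fun t ω => ∑ k ∈ Finset.range n, Zs k t ω := by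
  induction n with
  | zero => simpa only [Finset.range_zero, Finset.sum_empty] using isNonnegSupermart_zero
  | succ n ih => simpa only [Finset.sum_range_succ] using ih.add_supermart (hZs n)

lemma IsNonnegSupermart.const_mul (hZ : IsNonnegSupermart M Z) {c : ℝ} (hc : 0 ≤ c) :
    IsNonnegSupermart M fun t ω => (c : EReal) * Z t ω := by
  have hc' : (0 : EReal) ≤ c := EReal.coe_nonneg.2 hc
  induction hZ with
  | simple X hX hpos =>
    simpa only [EReal.coe_mul] using
      IsNonnegSupermart.simple _ (hX.const_mul c) fun t ω => mul_nonneg hc (hpos t ω)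
  | add X Y _ hY hpos ih =>
    have distrib (t : ℝ≥0) (ω : Ω) : (c : EReal) * (X t ω + (Y t ω : EReal)) =
        c * X t ω + ((c * Y t ω : ℝ) : EReal) := by
      rw [EReal.left_distrib_of_nonneg_of_ne_top hc' (EReal.coe_ne_top c), EReal.coe_mul]
    simp_rw [distrib]
    refine .add _ _ ih (hY.const_mul c) fun t ω => ?_
    rw [← distrib]
    exact EReal.mul_nonneg hc' (hpos t ω)
  | liminf _ _ ih =>
    simpa only [EReal.liminf_const_mul_of_nonneg_of_ne_top hc' (EReal.coe_ne_top c)] using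
      IsNonnegSupermart.liminf _ ih

lemma IsNonnegSupermart.stopped (hZ : IsNonnegSupermart M Z) {σ : Ω → ℝ≥0∞}
    (hσ : M.IsStoppingTime σ) : IsNonnegSupermart M fun t ω => Z (capTime (σ ω) t) ω := by
  induction hZ with
  | simple _ hX hpos => exact .simple _ (hX.stopped hσ) fun t ω => hpos _ _
  | add _ _ _ hY hpos ih => exact .add _ _ ih (hY.stopped hσ) fun t ω => hpos _ _
  | liminf _ _ ih => exact .liminf _ ih

end Supermartingale

section Enforceability

variable {E E' : Set (ℝ≥0 × Ω)}

lemma InstantlyEnforceable.mono (hE : InstantlyEnforceable M E) (hsub : E ⊆ E') :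
    InstantlyEnforceable M E' := by
  obtain ⟨V, hV, V_zero, V_top⟩ := hE
  exact ⟨V, hV, V_zero, fun t ω htω => V_top t ω fun h => htω (hsub h)⟩

lemma instantlyEnforceable_univ (hd : 0 < M.d) : InstantlyEnforceable M univ :=
  ⟨_, isNonnegSupermart_const hd zero_le_one, fun _ => EReal.coe_one,
    fun _ _ htω => absurd (mem_univ _) htω⟩

lemma InstantlyEnforceable.exists_eq_top (hE : InstantlyEnforceable M E) {δ : ℝ} (hδ : 0 < δ) :
    ∃ V, IsNonnegSupermart M V ∧ (∀ ω, V 0 ω = δ) ∧ ∀ t ω, (t, ω) ∉ E → V t ω = ⊤ := by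
  obtain ⟨V, hV, V_zero, V_top⟩ := hE
  exact ⟨_, hV.const_mul hδ.le, fun ω => by rw [V_zero, mul_one],
    fun t ω htω => by rw [V_top t ω htω, EReal.coe_mul_top_of_pos hδ]⟩

lemma InstantlyEnforceable.iInter {Es : ℕ → Set (ℝ≥0 × Ω)}
    (hEs : ∀ n, InstantlyEnforceable M (Es n)) : InstantlyEnforceable M (⋂ n, Es n) := by
  have weight_pos (n : ℕ) : (0 : ℝ) < 1 / 2 / 2 ^ n := by positivity
  choose V hV V_zero V_top using fun n => (hEs n).exists_eq_top (weight_pos n)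
  refine ⟨_, .liminf _ fun n => .sum hV n, fun ω => ?_, fun t ω htω => ?_⟩
  · have total_weight := (hasSum_geometric_two' 1).tendsto_sum_nat
    have := (continuous_coe_real_ereal.tendsto _).comp total_weight
    refine Tendsto.liminf_eq (this.congr fun n => ?_)
    simp only [Function.comp_apply, V_zero]
    exact map_sum (⟨⟨Real.toEReal, EReal.coe_zero⟩, EReal.coe_add⟩ : ℝ →+ EReal) _ _
  · obtain ⟨k, hk⟩ : ∃ k, (t, ω) ∉ Es k := by simpa only [mem_iInter, not_forall] using htω
    refine (tendsto_nhds_of_eventually_eq ?_).liminf_eq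
    filter_upwards [eventually_gt_atTop k] with n hn
    refine top_le_iff.1 ((V_top k t ω hk).ge.trans ?_)
    exact Finset.single_le_sum (f := fun k => V k t ω) (fun i _ => (hV i).nonneg t ω)
      (Finset.mem_range.2 hn)

lemma InstantlyEnforceable.inter (hE : InstantlyEnforceable M E)
    (hE' : InstantlyEnforceable M E') : InstantlyEnforceable M (E ∩ E') := by
  refine (InstantlyEnforceable.iInter (Es := fun n => if n = 0 then E else E') fun n => ?_).mono ?_
  · split_ifs
    exacts [hE, hE']
  · exact fun p hp => ⟨by simpa using mem_iInter.1 hp 0, by simpa using mem_iInter.1 hp 1⟩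

/-- The pairs `(t, ω)` such that the path of `ω` has stayed in `E` up to and including time `t`. -/
def hull (E : Set (ℝ≥0 × Ω)) : Set (ℝ≥0 × Ω) := {p | ∀ s ≤ p.1, (s, p.2) ∈ E}

lemma hull_subset (E : Set (ℝ≥0 × Ω)) : hull E ⊆ E := fun p hp => hp p.1 le_rfl

/-- A set of pairs `(t, ω)` that contains, with each of them, all the earlier ones `(s, ω)`. -/
def IsTimeLower (E : Set (ℝ≥0 × Ω)) : Prop := ∀ ⦃t ω⦄, (t, ω) ∈ E → ∀ s ≤ t, (s, ω) ∈ E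

lemma isTimeLower_hull (E : Set (ℝ≥0 × Ω)) : IsTimeLower (hull E) :=
  fun _ _ htω _ hst r hrs => htω r (hrs.trans hst)

open Classical in
/-- Some time in `[0, r]` at which the path of `ω` is outside `E`, and `∞` if there is none. -/
def violationTime (E : Set (ℝ≥0 × Ω)) (r : ℝ≥0) (ω : Ω) : ℝ≥0∞ :=
  if h : ∃ s ≤ r, (s, ω) ∉ E then (h.choose : ℝ≥0∞) else ⊤

lemma violationTime_spec {r s : ℝ≥0} {ω : Ω} (hs : violationTime E r ω = s) :
    s ≤ r ∧ (s, ω) ∉ E := by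
  unfold violationTime at hs
  split_ifs at hs with h
  · rw [ENNReal.coe_inj] at hs
    exact hs ▸ h.choose_spec
  · exact absurd hs ENNReal.top_ne_coe

lemma violationTime_le {r s : ℝ≥0} {ω : Ω} (hsr : s ≤ r) (hs : (s, ω) ∉ E) :
    violationTime E r ω ≤ r := by
  have h : ∃ s ≤ r, (s, ω) ∉ E := ⟨s, hsr, hs⟩
  rw [violationTime, dif_pos h]
  exact ENNReal.coe_le_coe.2 h.choose_spec.1

-- Although `violationTime` is chosen arbitrarily, its graph is blockable.
lemma AssumptionA.isStoppingTime_violationTime (hA : AssumptionA M)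
    (hE : InstantlyEnforceable M E) (r : ℝ≥0) : M.IsStoppingTime (violationTime E r) := fun t => by
  have graph_blockable :
      InstantlyBlockable M {p : ℝ≥0 × Ω | violationTime E r p.2 = (p.1 : ℝ≥0∞)} :=
    hE.mono fun p hp hgraph => (violationTime_spec hgraph).2 hp
  convert hA t _ graph_blockable using 1
  ext ω
  simp only [mem_ofPred_eq]
  constructor
  · intro hle
    obtain ⟨s, hs⟩ := WithTop.ne_top_iff_exists.1 (ne_top_of_le_ne_top ENNReal.coe_ne_top hle)
    exact ⟨s, ENNReal.coe_le_coe.1 (hs.trans_le hle), hs.symm⟩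
  · rintro ⟨s, hst, hs⟩
    exact hs ▸ ENNReal.coe_le_coe.2 hst

lemma AssumptionA.instantlyEnforceable_lt_violationTime (hA : AssumptionA M)
    (hE : InstantlyEnforceable M E) (r : ℝ≥0) :
    InstantlyEnforceable M {p : ℝ≥0 × Ω | (p.1 : ℝ≥0∞) < violationTime E r p.2} := by
  obtain ⟨V, hV, V_zero, V_top⟩ := hE
  refine ⟨_, hV.stopped (hA.isStoppingTime_violationTime ⟨V, hV, V_zero, V_top⟩ r),
    fun ω => by rw [capTime_zero]; exact V_zero ω, fun t ω htω => ?_⟩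
  have hle : violationTime E r ω ≤ t := not_lt.1 htω
  obtain ⟨s, hs⟩ : ∃ s : ℝ≥0, (s : ℝ≥0∞) = violationTime E r ω :=
    WithTop.ne_top_iff_exists.1 (ne_top_of_le_ne_top ENNReal.coe_ne_top hle)
  rw [← hs, coe_capTime_eq_min, min_eq_left (ENNReal.coe_le_coe.1 (hs.trans_le hle))]
  exact V_top s ω (violationTime_spec hs.symm).2

lemma AssumptionA.instantlyEnforceable_hull (hA : AssumptionA M)
    (hE : InstantlyEnforceable M E) : InstantlyEnforceable M (hull E) := by
  let D := TopologicalSpace.denseSeq ℝ≥0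
  refine (hE.inter (.iInter fun n =>
    hA.instantlyEnforceable_lt_violationTime hE (D n))).mono ?_
  rintro ⟨t, ω⟩ ⟨htω, hlt⟩ s hst
  by_contra hs
  obtain hst | rfl := hst.lt_or_eq
  · obtain ⟨n, hsn, hnt⟩ := (TopologicalSpace.denseRange_denseSeq ℝ≥0).exists_mem_open isOpen_Ioo
      (nonempty_Ioo.2 hst)
    exact (mem_iInter.1 hlt n).not_ge
      ((violationTime_le hsn.le hs).trans (ENNReal.coe_le_coe.2 hnt.le))
  · exact hs htω

end Enforceability

/-! ### Measurability under Assumption A -/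

section Measurability

variable {E : Set (ℝ≥0 × Ω)} {U : ℝ≥0 → Ω → ℝ}

lemma AssumptionA.measurableSet_of_forall_notMem (hA : AssumptionA M)
    (hE : InstantlyEnforceable M E) {t : ℝ≥0} {N : Set Ω} (hN : ∀ ω ∈ N, (t, ω) ∉ E) :
    MeasurableSet[M.F t] N := by
  have blockable : InstantlyBlockable M ({t} ×ˢ N) :=
    hE.mono fun p hp ⟨ht, hω⟩ => hN p.2 hω (ht ▸ hp)
  convert hA t _ blockable using 1
  ext ω
  exact ⟨fun hω => ⟨t, le_rfl, rfl, hω⟩, fun ⟨_, _, _, hω⟩ => hω⟩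

lemma AssumptionA.measurableSet_congr (hA : AssumptionA M) (hE : InstantlyEnforceable M E)
    {t : ℝ≥0} {A B : Set Ω} (hB : MeasurableSet[M.F t] B)
    (hAB : ∀ ω, (t, ω) ∈ E → (ω ∈ A ↔ ω ∈ B)) : MeasurableSet[M.F t] A := by
  have A_eq : A = (B \ (B \ A)) ∪ (A \ B) := by
    rw [sdiff_sdiff_right_self, inter_comm, inter_union_sdiff]
  rw [A_eq]
  exact (hB.diff (hA.measurableSet_of_forall_notMem hE
      fun ω hω htω => hω.2 ((hAB ω htω).2 hω.1))).union
    (hA.measurableSet_of_forall_notMem hE fun ω hω htω => hω.2 ((hAB ω htω).1 hω.1))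

lemma AssumptionA.measurable_of_tendsto (hA : AssumptionA M) (hE : InstantlyEnforceable M E)
    {t : ℝ≥0} {f : ℕ → Ω → ℝ} {g : Ω → ℝ} (hf : ∀ n, Measurable[M.F t] (f n))
    (hfg : ∀ ω, (t, ω) ∈ E → Tendsto (fun n => f n ω) atTop (𝓝 (g ω))) :
    Measurable[M.F t] g := by
  let A : Set Ω := {ω | (t, ω) ∈ E}
  have hEt : MeasurableSet[M.F t] A :=
    hA.measurableSet_congr hE MeasurableSet.univ fun ω hω => by simp [A, hω]
  have indicator_measurable : Measurable[M.F t] (A.indicator g) := by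
    let := M.F t
    refine measurable_of_tendsto_metrizable (f := fun n => A.indicator (f n))
      (fun n => (hf n).indicator hEt) (tendsto_pi_nhds.2 fun ω => ?_)
    by_cases hω : ω ∈ A
    · simpa only [indicator_of_mem hω] using hfg ω hω
    · simp only [indicator_of_notMem hω, tendsto_const_nhds]
  exact fun B hB => hA.measurableSet_congr hE (indicator_measurable hB) fun ω hω => by
    rw [mem_preimage, mem_preimage, indicator_of_mem (show ω ∈ A from hω)]

lemma MartingaleSpace.IsStoppingTime.measurable_capTime {σ : Ω → ℝ≥0∞}
    (hσ : M.IsStoppingTime σ) (t : ℝ≥0) : Measurable[M.F t] fun ω => capTime (σ ω) t := by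
  let := M.F t
  refine measurable_of_Iic fun u => ?_
  have preimage_eq : (fun ω => capTime (σ ω) t) ⁻¹' Iic u = {ω | σ ω ≤ u} ∪ {_ω | t ≤ u} := by
    ext ω
    rw [mem_preimage, mem_Iic, ← ENNReal.coe_le_coe, coe_capTime, min_le_iff, ENNReal.coe_le_coe]
    rfl
  rw [preimage_eq]
  rcases le_or_gt t u with htu | hut
  · simp [htu]
  · simpa [hut.not_ge] using hσ.measurableSet_le_of_le hut.le

/-- The paths of `U` are continuous on `[0, t]` whenever `(t, ω) ∈ E`. -/
def HasContinuousPathsOn (U : ℝ≥0 → Ω → ℝ) (E : Set (ℝ≥0 × Ω)) : Prop :=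
  ∀ ⦃t ω⦄, (t, ω) ∈ E → ContinuousOn (fun s => U s ω) (Icc 0 t)

lemma AssumptionA.measurable_stopped (hA : AssumptionA M) (hE : InstantlyEnforceable M E)
    (hU : ∀ t, Measurable[M.F t] (U t)) (hc : HasContinuousPathsOn U E)
    {σ : Ω → ℝ≥0∞} (hσ : M.IsStoppingTime σ) (t : ℝ≥0) :
    Measurable[M.F t] fun ω => U (capTime (σ ω) t) ω := by
  let := M.F t
  have capTime_measurable := (hσ.measurable_capTime t).stronglyMeasurable
  refine hA.measurable_of_tendsto hE
    (f := fun n ω => U (min (capTime_measurable.approx n ω) t) ω) (fun n => ?_) fun ω hω => ?_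
  · exact SimpleFunc.measurable_bind _ (fun s => U (min s t))
      fun s => (hU _).mono (M.mono (min_le_right _ _)) le_rfl
  · have times_tendsto := (capTime_measurable.tendsto_approx ω).min (tendsto_const_nhds (x := t))
    rw [min_eq_left (capTime_le _ _)] at times_tendsto
    exact (hc hω _ ⟨zero_le, capTime_le _ _⟩).tendsto.comp (tendsto_nhdsWithin_iff.2
      ⟨times_tendsto, Eventually.of_forall fun n => ⟨zero_le, min_le_right _ _⟩⟩)

lemma continuous_capTime (a : ℝ≥0∞) : Continuous (capTime a) := by
  induction a with
  | top => simpa only [funext fun t => capTime_eq_right (t := t) le_top] using continuous_id'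
  | coe a =>
    exact (continuous_const.min continuous_id').congr fun t => (coe_capTime_eq_min a t).symm

lemma IsTimeGrid.continuousOn_gridIntegral {τ : ℕ → Ω → ℝ≥0∞} (hτ : IsTimeGrid M τ)
    (g : ℕ → Ω → ℝ) {t : ℝ≥0} {ω : Ω} (hc : ContinuousOn (fun s => U s ω) (Icc 0 t)) :
    ContinuousOn (fun s => gridIntegral τ g U s ω) (Icc 0 t) := by
  obtain ⟨N, hN⟩ := hτ.exists_forall_ge ω t
  have stopped_continuous (n : ℕ) : ContinuousOn (fun s => U (capTime (τ n ω) s) ω) (Icc 0 t) :=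
    hc.comp (continuous_capTime _).continuousOn fun s hs => ⟨zero_le, (capTime_le _ _).trans hs.2⟩
  exact (continuousOn_finsetSum _ fun n _ =>
    ((stopped_continuous (n + 1)).sub (stopped_continuous n)).const_smul (g n ω)).congr
      fun s hs => gridIntegral_eq_sum g U fun n hn => (ENNReal.coe_le_coe.2 hs.2).trans (hN n hn)

lemma AssumptionA.measurable_gridIntegral (hA : AssumptionA M) (hE : InstantlyEnforceable M E)
    {τ : ℕ → Ω → ℝ≥0∞} {g : ℕ → Ω → ℝ} (hg : IsStrategy M τ g)
    (hU : ∀ t, Measurable[M.F t] (U t)) (hc : HasContinuousPathsOn U E) (t : ℝ≥0) :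
    Measurable[M.F t] (gridIntegral τ g U t) := by
  refine hA.measurable_of_tendsto hE (f := fun N ω => ∑ n ∈ Finset.range N,
    {ω | τ n ω ≤ (t : ℝ≥0∞)}.indicator (g n) ω *
      (U (capTime (τ (n + 1) ω) t) ω - U (capTime (τ n ω) t) ω))
    (fun N => ?_) fun ω _ => tendsto_nhds_of_eventually_eq ?_
  · let := M.F t
    exact Finset.measurable_fun_sum _ fun n _ => (hg.known n t).mul
      ((hA.measurable_stopped hE hU hc (hg.stopping (n + 1)) t).sub
        (hA.measurable_stopped hE hU hc (hg.stopping n) t))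
  · obtain ⟨N, hN⟩ := hg.exists_forall_ge ω t
    filter_upwards [eventually_ge_atTop N] with N' hN'
    rw [gridIntegral_eq_sum g U fun n hn => hN n (hN'.trans hn)]
    refine Finset.sum_congr rfl fun n _ => ?_
    by_cases hn : τ n ω ≤ (t : ℝ≥0∞)
    · rw [indicator_of_mem (show ω ∈ {ω | τ n ω ≤ (t : ℝ≥0∞)} from hn)]
    · have htn : (t : ℝ≥0∞) ≤ τ n ω := (not_le.1 hn).le
      rw [capTime_eq_right htn, capTime_eq_right (htn.trans (hg.mono ω n.le_succ)), sub_self,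
        mul_zero, mul_zero]

lemma IsSimpleCapital.continuousOn (hU : IsSimpleCapital M U) (t : ℝ≥0) (ω : Ω) :
    ContinuousOn (fun s => U s ω) (Icc 0 t) := by
  obtain ⟨c, τ, g, hg, -, hU⟩ := isSimpleCapital_iff.1 hU
  simp_rw [hU]
  exact continuousOn_finsetSum _ fun j _ => continuousOn_const.add
    ((hg j).continuousOn_gridIntegral (g j) (M.S_cont j ω).continuousOn)

lemma IsSimpleCapital.measurable (hd : 0 < M.d) (hA : AssumptionA M) (hU : IsSimpleCapital M U)
    (t : ℝ≥0) : Measurable[M.F t] (U t) := by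
  obtain ⟨c, τ, g, hg, -, hU⟩ := isSimpleCapital_iff.1 hU
  let := M.F t
  rw [funext (hU t)]
  exact Finset.measurable_fun_sum _ fun j _ => measurable_const.add
    (hA.measurable_gridIntegral (instantlyEnforceable_univ hd) (hg j) (M.S_adapted j)
      (fun _ ω _ => (M.S_cont j ω).continuousOn) t)

end Measurability

/-! ### Hitting times -/

section HittingTime

/-- The first time at which `|U|` reaches the level `ε` while the path is still in `E`. Unlike
`hitting`, it only looks at the part of the path where `U` is known to be continuous. -/
def hittingTime (E : Set (ℝ≥0 × Ω)) (U : ℝ≥0 → Ω → ℝ) (ε : ℝ) (ω : Ω) : ℝ≥0∞ :=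
  ⨅ s ∈ {s : ℝ≥0 | (s, ω) ∈ E ∧ ε ≤ |U s ω|}, (s : ℝ≥0∞)

variable {E : Set (ℝ≥0 × Ω)} {U : ℝ≥0 → Ω → ℝ} {ε : ℝ} {ω : Ω}

lemma hittingTime_le {s : ℝ≥0} (hs : (s, ω) ∈ E) (hU : ε ≤ |U s ω|) : hittingTime E U ε ω ≤ s :=
  iInf₂_le (f := fun s (_ : s ∈ {s : ℝ≥0 | (s, ω) ∈ E ∧ ε ≤ |U s ω|}) => (s : ℝ≥0∞)) s ⟨hs, hU⟩

lemma le_hittingTime {t : ℝ≥0} (hU : ∀ s ≤ t, |U s ω| < ε) : (t : ℝ≥0∞) ≤ hittingTime E U ε ω :=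
  le_iInf₂ fun s hs => ENNReal.coe_le_coe.2 <| le_of_not_gt fun hst => (hU s hst.le).not_ge hs.2

lemma exists_hittingTime_eq (hlow : IsTimeLower E) (hc : HasContinuousPathsOn U E)
    (htop : hittingTime E U ε ω ≠ ⊤) :
    ∃ s : ℝ≥0, hittingTime E U ε ω = s ∧ ε ≤ |U s ω| := by
  obtain ⟨r, hr, hrU⟩ : ∃ r : ℝ≥0, (r, ω) ∈ E ∧ ε ≤ |U r ω| := by
    by_contra! hnone
    exact htop (iInf₂_eq_top.2 fun s hs => absurd hs.2 (hnone s hs.1).not_ge)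
  have hits_compact : IsCompact (Icc 0 r ∩ (fun s => |U s ω|) ⁻¹' Ici ε) :=
    isCompact_Icc.of_isClosed_subset
      ((hc hr).abs.preimage_isClosed_of_isClosed isClosed_Icc isClosed_Ici) inter_subset_left
  obtain ⟨s, ⟨hsr, hsU⟩, s_least⟩ := hits_compact.exists_isLeast ⟨r, ⟨zero_le, le_rfl⟩, hrU⟩
  refine ⟨s, (hittingTime_le (hlow hr s hsr.2) hsU).antisymm ?_, hsU⟩
  refine le_iInf₂ fun u hu => ENNReal.coe_le_coe.2 ?_
  rcases le_total u r with hur | hru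
  · exact s_least ⟨⟨zero_le, hur⟩, hu.2⟩
  · exact hsr.2.trans hru

lemma hittingTime_le_iff (hlow : IsTimeLower E) (hc : HasContinuousPathsOn U E) {t : ℝ≥0}
    (ht : (t, ω) ∈ E) : hittingTime E U ε ω ≤ t ↔ ∃ s ≤ t, ε ≤ |U s ω| := by
  constructor
  · intro hle
    obtain ⟨s, hs, hsU⟩ :=
      exists_hittingTime_eq hlow hc (ne_top_of_le_ne_top ENNReal.coe_ne_top hle)
    exact ⟨s, ENNReal.coe_le_coe.1 (hs ▸ hle), hsU⟩
  · rintro ⟨s, hst, hsU⟩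
    exact (hittingTime_le (hlow ht s hst) hsU).trans (ENNReal.coe_le_coe.2 hst)

lemma exists_le_iff_forall_exists_denseSeq {f : ℝ≥0 → ℝ} {t : ℝ≥0}
    (hf : ContinuousOn f (Icc 0 t)) (ε : ℝ) :
    (∃ s ≤ t, ε ≤ f s) ↔
      ∀ m : ℕ, ∃ n, ε - 1 / ((m : ℝ) + 1) < f (min (TopologicalSpace.denseSeq ℝ≥0 n) t) := by
  have capped_continuous : Continuous fun r => f (min r t) :=
    hf.comp_continuous (by fun_prop) fun r => ⟨zero_le, min_le_right _ _⟩
  constructor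
  · rintro ⟨s, hst, hs⟩ m
    refine (TopologicalSpace.denseRange_denseSeq ℝ≥0).exists_mem_open
      (isOpen_lt continuous_const capped_continuous) ⟨s, ?_⟩
    rw [mem_ofPred_eq, min_eq_left hst]
    linarith [Nat.one_div_pos_of_nat (α := ℝ) (n := m)]
  · intro hdense
    obtain ⟨s, hs, s_max⟩ := isCompact_Icc.exists_isMaxOn ⟨0, le_rfl, zero_le⟩ hf
    refine ⟨s, hs.2, le_of_not_gt fun hlt => ?_⟩
    obtain ⟨m, hm⟩ := exists_nat_one_div_lt (sub_pos.2 hlt)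
    obtain ⟨n, hn⟩ := hdense m
    linarith [isMaxOn_iff.1 s_max _ ⟨zero_le, min_le_right (TopologicalSpace.denseSeq ℝ≥0 n) t⟩]

lemma AssumptionA.isStoppingTime_hittingTime (hA : AssumptionA M) (hE : InstantlyEnforceable M E)
    (hlow : IsTimeLower E) (hU : ∀ t, Measurable[M.F t] (U t)) (hc : HasContinuousPathsOn U E)
    (ε : ℝ) : M.IsStoppingTime (hittingTime E U ε) := fun t => by
  let D := TopologicalSpace.denseSeq ℝ≥0
  refine hA.measurableSet_congr hE
    (B := ⋂ m : ℕ, ⋃ n : ℕ, {ω | ε - 1 / ((m : ℝ) + 1) < |U (min (D n) t) ω|}) ?_ fun ω hω => ?_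
  · refine MeasurableSet.iInter fun m => MeasurableSet.iUnion fun n => ?_
    let := M.F t
    exact measurableSet_lt measurable_const
      ((hU (min (D n) t)).mono (M.mono (min_le_right _ _)) le_rfl).abs
  · simp only [mem_ofPred_eq, mem_iInter, mem_iUnion, hittingTime_le_iff hlow hc hω]
    exact exists_le_iff_forall_exists_denseSeq (hc hω).abs ε

lemma abs_capTime_hittingTime_le (hlow : IsTimeLower E) (hc : HasContinuousPathsOn U E)
    {t : ℝ≥0} (hω : (t, ω) ∈ E) (hzero : |U 0 ω| ≤ ε) :
    |U (capTime (hittingTime E U ε ω) t) ω| ≤ ε := by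
  set v := capTime (hittingTime E U ε ω) t with hv
  have hvt : v ≤ t := capTime_le _ _
  rcases eq_zero_or_pos v with hv0 | hv0
  · rwa [hv0]
  have before_hit (s : ℝ≥0) (hs : s ∈ Iio v) : |U s ω| ≤ ε := by
    refine le_of_not_ge fun hsU => (mem_Iio.1 hs).not_ge ?_
    rw [← ENNReal.coe_le_coe, hv, coe_capTime]
    exact (min_le_left _ _).trans (hittingTime_le (hlow hω s (hs.le.trans hvt)) hsU)
  have path_continuous : ContinuousWithinAt (fun s => |U s ω|) (Iio v) v :=
    ((hc hω).abs v ⟨zero_le, hvt⟩).mono fun s hs => ⟨zero_le, (mem_Iio.1 hs).le.trans hvt⟩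
  have v_mem_closure : v ∈ closure (Iio v) := by
    rw [closure_Iio' (show (Iio v).Nonempty from ⟨0, hv0⟩)]
    exact self_mem_Iic
  exact path_continuous.closure_le v_mem_closure continuousWithinAt_const before_hit

lemma AssumptionA.exists_isStoppingTime_abs_capTime_le (hA : AssumptionA M)
    (hE : InstantlyEnforceable M E) (hlow : IsTimeLower E) (hU : ∀ t, Measurable[M.F t] (U t))
    (hc : HasContinuousPathsOn U E) (hzero : ∀ ω, U 0 ω = 0) (hε : 0 < ε) :
    ∃ σ, M.IsStoppingTime σ ∧ (∀ t ω, (t, ω) ∈ E → |U (capTime (σ ω) t) ω| ≤ ε) ∧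
      ∀ (t : ℝ≥0) ω, (∀ s ≤ t, |U s ω| < ε) → (t : ℝ≥0∞) ≤ σ ω :=
  ⟨hittingTime E U ε, hA.isStoppingTime_hittingTime hE hlow hU hc ε,
    fun _ _ htω => abs_capTime_hittingTime_le hlow hc htω (by simp [hzero, hε.le]),
    fun _ _ => le_hittingTime⟩

end HittingTime

/-! ### Superhedging -/

section Superhedging

/-- Some nonnegative supermartingale started at `b` dominates `V`; in particular
`upperExp M V` is the infimum of the constants from which `V` can be superhedged. -/
def Superhedgeable (M : MartingaleSpace Ω) (V : ℝ≥0 → Ω → EReal) (b : Ω → EReal) : Prop :=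
  ∃ W, IsNonnegSupermart M W ∧ (∀ ω, W 0 ω = b ω) ∧ ∀ t ω, V t ω ≤ W t ω

lemma Superhedgeable.liminf {E : Set (ℝ≥0 × Ω)} (hE : InstantlyEnforceable M E)
    {V : ℝ≥0 → Ω → EReal} {Vs : ℕ → ℝ≥0 → Ω → EReal} {b : Ω → EReal}
    (hVs : ∀ n, Superhedgeable M (Vs n) b)
    (hV : ∀ t ω, (t, ω) ∈ E → ∀ᶠ n in atTop, V t ω ≤ Vs n t ω) {δ : ℝ} (hδ : 0 < δ) :
    Superhedgeable M V fun ω => b ω + δ := by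
  choose W hW W_zero W_ge using hVs
  obtain ⟨B, hB, B_zero, B_top⟩ := hE.exists_eq_top hδ
  have liminf_supermart := IsNonnegSupermart.liminf W hW
  refine ⟨_, liminf_supermart.add_supermart hB, fun ω => ?_, fun t ω => ?_⟩
  · simp only [W_zero, B_zero, liminf_const]
  · by_cases htω : (t, ω) ∈ E
    · refine le_trans (le_liminf_of_le (by isBoundedDefault) ?_)
        (le_add_of_nonneg_right (hB.nonneg t ω))
      filter_upwards [hV t ω htω] with n hn using hn.trans (W_ge n t ω)
    · rw [B_top t ω htω, EReal.add_top_of_ne_bot (liminf_supermart.ne_bot t ω)]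
      exact le_top

lemma upperExp_le_of_superhedgeable {V : ℝ≥0 → Ω → EReal} {x : EReal}
    (hV : Superhedgeable M V fun _ => x) : upperExp M V ≤ x := sInf_le hV

/-- The capital `Z` together with the gains from holding the positions `g` in `U` along `τ`. -/
def withGains (Z : ℝ≥0 → Ω → EReal) (τ : ℕ → Ω → ℝ≥0∞) (g : ℕ → Ω → ℝ) (U : ℝ≥0 → Ω → ℝ)
    (t : ℝ≥0) (ω : Ω) : EReal :=
  Z t ω + (gridIntegral τ g U t ω : EReal)

/-- Trading boundedly in `U` is essentially free: whenever a supermartingale `Z` plus the gains of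
a bounded strategy in `U` is nonnegative w.i.e., it can be superhedged from slightly more than
`Z 0`. This is what an integrator needs for hedging, and it passes to uniform limits. -/
def IsTradeable (M : MartingaleSpace Ω) (U : ℝ≥0 → Ω → ℝ) : Prop :=
  ∀ ⦃τ g Z E⦄, IsStrategy M τ g → IsEachBounded g → IsNonnegSupermart M Z →
    InstantlyEnforceable M E → (∀ t ω, (t, ω) ∈ E → 0 ≤ withGains Z τ g U t ω) →
      ∀ ⦃ε : ℝ⦄, 0 < ε → Superhedgeable M (withGains Z τ g U) fun ω => Z 0 ω + ε

variable {E : Set (ℝ≥0 × Ω)} {U : ℝ≥0 → Ω → ℝ} {Us : ℕ → ℝ≥0 → Ω → ℝ} {Z : ℝ≥0 → Ω → EReal}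
  {τ : ℕ → Ω → ℝ≥0∞} {g : ℕ → Ω → ℝ}

lemma IsSimpleCapital.isTradeable (hU : IsSimpleCapital M U) : IsTradeable M U := by
  intro τ g Z E hg hb hZ hE hpos ε hε
  obtain ⟨B, hB, B_zero, B_top⟩ := hE.exists_eq_top hε
  have hle (t : ℝ≥0) (ω : Ω) :
      withGains Z τ g U t ω ≤ withGains (fun t ω => Z t ω + B t ω) τ g U t ω :=
    add_le_add (le_add_of_nonneg_right (hB.nonneg t ω)) le_rfl
  refine ⟨_, .add _ _ (hZ.add_supermart hB) (hU.gridIntegral hg hb) fun t ω => ?_, fun ω => ?_, hle⟩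
  · by_cases htω : (t, ω) ∈ E
    · exact (hpos t ω htω).trans (hle t ω)
    · rw [B_top t ω htω, EReal.add_top_of_ne_bot (hZ.ne_bot t ω), EReal.top_add_coe]
      exact le_top
  · rw [B_zero, gridIntegral_zero, EReal.coe_zero, add_zero]

lemma IsTimeGrid.tendstoUniformlyOn_gridIntegral (hτ : IsTimeGrid M τ) (g : ℕ → Ω → ℝ) {t : ℝ≥0}
    {ω : Ω} (h : TendstoUniformlyOn (fun n s => Us n s ω) (fun s => U s ω) atTop (Icc 0 t)) :
    TendstoUniformlyOn (fun n s => gridIntegral τ g (Us n) s ω)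
      (fun s => gridIntegral τ g U s ω) atTop (Icc 0 t) := by
  have capped (k : ℕ) : TendstoUniformlyOn (fun n s => Us n (capTime (τ k ω) s) ω)
      (fun s => U (capTime (τ k ω) s) ω) atTop (Icc 0 t) :=
    (h.comp (capTime (τ k ω))).mono fun s hs => ⟨zero_le, (capTime_le _ _).trans hs.2⟩
  have partial_sums (N : ℕ) : TendstoUniformlyOn
      (fun n s => ∑ k ∈ Finset.range N,
        g k ω * (Us n (capTime (τ (k + 1) ω) s) ω - Us n (capTime (τ k ω) s) ω))
      (fun s => ∑ k ∈ Finset.range N,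
        g k ω * (U (capTime (τ (k + 1) ω) s) ω - U (capTime (τ k ω) s) ω)) atTop (Icc 0 t) := by
    induction N with
    | zero => exact (tendsto_const_nhds (x := (0 : ℝ))).tendstoUniformlyOn_const _
    | succ N ih =>
      simp only [Finset.sum_range_succ]
      exact ih.add ((uniformContinuous_const_smul (g N ω)).comp_tendstoUniformlyOn
        ((capped (N + 1)).sub (capped N)))
  obtain ⟨N, hN⟩ := hτ.exists_forall_ge ω t
  have integral_eq (X : ℝ≥0 → Ω → ℝ) {s : ℝ≥0} (hs : s ∈ Icc 0 t) :=
    gridIntegral_eq_sum g X fun n hn => (ENNReal.coe_le_coe.2 hs.2).trans (hN n hn)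
  exact ((partial_sums N).congr
    (Eventually.of_forall fun n s hs => (integral_eq _ hs).symm)).congr_right
      fun s hs => (integral_eq _ hs).symm

lemma withGains_capTime_le {σ : Ω → ℝ≥0∞} {U' : ℝ≥0 → Ω → ℝ} (hτ : IsTimeGrid M τ) {t : ℝ≥0}
    {ω : Ω} {δ : ℝ} (hδ : |gridIntegral τ g U' (capTime (σ ω) t) ω -
      gridIntegral τ g U (capTime (σ ω) t) ω| ≤ δ) :
    withGains Z τ g U (capTime (σ ω) t) ω ≤ withGains (fun t ω => Z (capTime (σ ω) t) ω + δ)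
      (stopGrid τ σ) (stopPosition τ σ g) U' t ω := by
  rw [withGains, withGains, hτ.gridIntegral_stopGrid, add_assoc, ← EReal.coe_add]
  exact add_le_add le_rfl (EReal.coe_le_coe_iff.2 (by linarith [(abs_le.1 hδ).1]))

-- Trade in `Us n` instead of `U`, but only until the gains differ by `ε / 3`.
lemma IsTradeable.of_tendstoUniformlyOn (hd : 0 < M.d) (hA : AssumptionA M)
    (hUs : ∀ n, IsTradeable M (Us n)) {D : Set (ℝ≥0 × Ω)} (hD : InstantlyEnforceable M D)
    (Us_measurable : ∀ n t, Measurable[M.F t] (Us n t))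
    (U_measurable : ∀ t, Measurable[M.F t] (U t))
    (Us_continuous : ∀ n, HasContinuousPathsOn (Us n) D) (U_continuous : HasContinuousPathsOn U D)
    (hlim : ∀ t ω, (t, ω) ∈ D →
      TendstoUniformlyOn (fun n s => Us n s ω) (fun s => U s ω) atTop (Icc 0 t)) :
    IsTradeable M U := by
  intro τ g Z E hg hb hZ hE hpos ε hε
  have hδ : 0 < ε / 3 := by positivity
  let gap n t ω := gridIntegral τ g (Us n) t ω - gridIntegral τ g U t ω
  have hH := hA.instantlyEnforceable_hull (hD.inter hE)
  have hHD {p} (hp : p ∈ hull (D ∩ E)) : p ∈ D := (hull_subset _ hp).1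
  have gap_measurable n t : Measurable[M.F t] (gap n t) := by
    let := M.F t
    exact (hA.measurable_gridIntegral hD hg (Us_measurable n) (Us_continuous n) t).sub
      (hA.measurable_gridIntegral hD hg U_measurable U_continuous t)
  have gap_continuous n : HasContinuousPathsOn (gap n) (hull (D ∩ E)) := fun t ω htω =>
    (hg.continuousOn_gridIntegral g (Us_continuous n (hHD htω))).sub
      (hg.continuousOn_gridIntegral g (U_continuous (hHD htω)))
  choose σ hσ gap_le le_σ using fun n => hA.exists_isStoppingTime_abs_capTime_le hH
    (isTimeLower_hull _) (gap_measurable n) (gap_continuous n)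
    (fun ω => by simp only [gap, gridIntegral_zero, sub_self]) hδ
  have stopped_le n t ω (htω : (t, ω) ∈ hull (D ∩ E)) :
      withGains Z τ g U (capTime (σ n ω) t) ω ≤
        withGains (fun t ω => Z (capTime (σ n ω) t) ω + ((ε / 3 : ℝ) : EReal))
          (stopGrid τ (σ n)) (stopPosition τ (σ n) g) (Us n) t ω :=
    withGains_capTime_le hg.toIsTimeGrid (gap_le n t ω htω)
  have approx_superhedgeable n := hUs n (hg.stopped (hσ n))
    (hb.indicator fun k => {ω | τ k ω < σ n ω})
    ((hZ.stopped (hσ n)).add_supermart (isNonnegSupermart_const hd hδ.le)) hH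
    (fun t ω htω => (hpos _ _ (htω _ (capTime_le _ _)).2).trans (stopped_le n t ω htω)) hδ
  simp only [capTime_zero] at approx_superhedgeable
  convert Superhedgeable.liminf hH approx_superhedgeable (fun t ω htω => ?_) hδ using 2 with ω
  · rw [add_assoc, add_assoc, ← EReal.coe_add, ← EReal.coe_add]
    congr 2
    ring
  · have gap_small := Metric.tendstoUniformlyOn_iff.1
      (hg.tendstoUniformlyOn_gridIntegral g (hlim t ω (hHD htω))) _ hδ
    filter_upwards [gap_small] with n hn
    have not_stopped : (t : ℝ≥0∞) ≤ σ n ω := le_σ n t ω fun s hs =>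
      (abs_sub_comm _ _).trans_lt (hn s ⟨zero_le, hs⟩)
    simpa only [capTime_eq_right not_stopped] using stopped_le n t ω htω

end Superhedging

section Truncation

variable {τ : ℕ → Ω → ℝ≥0∞} {g : ℕ → Ω → ℝ} {U : ℝ≥0 → Ω → ℝ} {Z : ℝ≥0 → Ω → EReal}
  {E : Set (ℝ≥0 × Ω)}

/-- The time of the first trade whose position exceeds `N` in absolute value. -/
def truncTime (τ : ℕ → Ω → ℝ≥0∞) (g : ℕ → Ω → ℝ) (N : ℕ) (ω : Ω) : ℝ≥0∞ :=
  ⨅ k ∈ {k | (N : ℝ) < |g k ω|}, τ k ω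

lemma truncTime_le {N k : ℕ} {ω : Ω} (hk : (N : ℝ) < |g k ω|) : truncTime τ g N ω ≤ τ k ω :=
  iInf₂_le (f := fun k (_ : k ∈ {k | (N : ℝ) < |g k ω|}) => τ k ω) k hk

lemma IsTimeGrid.truncTime_le_iff (hτ : IsTimeGrid M τ) {N : ℕ} {t : ℝ≥0} {ω : Ω} :
    truncTime τ g N ω ≤ t ↔ ∃ k, (N : ℝ) < |g k ω| ∧ τ k ω ≤ t := by
  refine ⟨fun hle => ?_, fun ⟨k, hk, hkt⟩ => (truncTime_le hk).trans hkt⟩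
  rcases {k | (N : ℝ) < |g k ω|}.eq_empty_or_nonempty with hempty | hne
  · rw [truncTime, hempty, iInf_emptyset] at hle
    exact absurd hle (by simp)
  · exact ⟨_, Nat.sInf_mem hne, le_trans (b := truncTime τ g N ω)
      (le_iInf₂ fun k hk => hτ.mono ω (Nat.sInf_le hk)) hle⟩

lemma IsStrategy.isStoppingTime_truncTime (hg : IsStrategy M τ g) (N : ℕ) :
    M.IsStoppingTime (truncTime τ g N) := fun t => by
  have union_eq : {ω | truncTime τ g N ω ≤ t} =
      ⋃ k, {ω | g k ω ∈ {x : ℝ | (N : ℝ) < |x|} ∧ τ k ω ≤ t} := by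
    ext ω
    simp only [mem_ofPred_eq, mem_iUnion, hg.truncTime_le_iff]
  rw [union_eq]
  exact MeasurableSet.iUnion fun k => (isKnownAt_iff (hg.stopping k)).1 (hg.known k) _
    (measurableSet_lt measurable_const measurable_norm) t

lemma isEachBounded_stopPosition_truncTime (τ : ℕ → Ω → ℝ≥0∞) (g : ℕ → Ω → ℝ) (N : ℕ) :
    IsEachBounded (stopPosition τ (truncTime τ g N) g) := fun n => by
  refine ⟨N, fun ω => ?_⟩
  by_cases hn : τ n ω < truncTime τ g N ω
  · rw [stopPosition, indicator_of_mem (by exact hn)]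
    exact le_of_not_gt fun hN => hn.not_ge (truncTime_le hN)
  · rw [stopPosition, indicator_of_notMem (by exact hn), abs_zero]
    exact N.cast_nonneg

lemma IsTimeGrid.eventually_le_truncTime (hτ : IsTimeGrid M τ) (g : ℕ → Ω → ℝ) (t : ℝ≥0) (ω : Ω) :
    ∀ᶠ N : ℕ in atTop, (t : ℝ≥0∞) ≤ truncTime τ g N ω := by
  obtain ⟨n, hn⟩ := hτ.exists_forall_ge ω t
  filter_upwards [eventually_ge_atTop ⌈∑ k ∈ Finset.range n, |g k ω|⌉₊] with N hN
  refine le_iInf₂ fun k hk => hn k (le_of_not_gt fun hkn => ?_)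
  exact LT.lt.not_ge hk
    ((Finset.single_le_sum (f := fun k => |g k ω|) (fun _ _ => abs_nonneg _)
      (Finset.mem_range.2 hkn)).trans (Nat.ceil_le.1 hN))

lemma IsTradeable.superhedgeable (hA : AssumptionA M) (hU : IsTradeable M U)
    (hg : IsStrategy M τ g) (hZ : IsNonnegSupermart M Z) (hE : InstantlyEnforceable M E)
    (hpos : ∀ t ω, (t, ω) ∈ E → 0 ≤ withGains Z τ g U t ω) {ε : ℝ} (hε : 0 < ε) :
    Superhedgeable M (withGains Z τ g U) fun ω => Z 0 ω + ε := by
  have hH := hA.instantlyEnforceable_hull hE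
  have truncated_eq (N : ℕ) (t : ℝ≥0) (ω : Ω) :
      withGains (fun t ω => Z (capTime (truncTime τ g N ω) t) ω) (stopGrid τ (truncTime τ g N))
        (stopPosition τ (truncTime τ g N) g) U t ω =
      withGains Z τ g U (capTime (truncTime τ g N ω) t) ω := by
    rw [withGains, hg.gridIntegral_stopGrid, withGains]
  have truncated_superhedgeable (N : ℕ) := hU (hg.stopped (hg.isStoppingTime_truncTime N))
    (isEachBounded_stopPosition_truncTime τ g N) (hZ.stopped (hg.isStoppingTime_truncTime N)) hH
    (fun t ω htω => (hpos _ _ (htω _ (capTime_le _ _))).trans_eq (truncated_eq N t ω).symm)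
    (half_pos hε)
  simp only [capTime_zero] at truncated_superhedgeable
  convert Superhedgeable.liminf hH truncated_superhedgeable (fun t ω _ => ?_) (half_pos hε)
    using 2 with ω
  · rw [add_assoc, ← EReal.coe_add, add_halves]
  · filter_upwards [hg.eventually_le_truncTime g t ω] with N hN
    rw [truncated_eq, capTime_eq_right hN]

end Truncation

section UpperExpectation

variable {Φ Ψ : ℝ≥0 → Ω → EReal}

lemma le_of_forall_pos_le_add_coe {a b : EReal} (h : ∀ ε : ℝ, 0 < ε → a ≤ b + ε) : a ≤ b := by
  induction b with
  | bot => simpa only [EReal.bot_add] using h 1 one_pos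
  | top => exact le_top
  | coe r =>
    refine EReal.le_of_forall_lt_iff_le.1 fun z hrz => ?_
    simpa only [← EReal.coe_add, add_sub_cancel] using
      h (z - r) (sub_pos.2 (EReal.coe_lt_coe_iff.1 hrz))

lemma upperExp_const_mul_le {c : ℝ} (hc : 0 < c) (Φ : ℝ≥0 → Ω → EReal) :
    upperExp M (fun t ω => c * Φ t ω) ≤ c * upperExp M Φ := by
  have hc' : (0 : EReal) < c := EReal.coe_pos.2 hc
  rw [← EReal.div_le_iff_le_mul hc' (EReal.coe_ne_top c)]
  refine le_sInf ?_
  rintro x ⟨Z, hZ, Z_zero, Z_ge⟩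
  rw [EReal.div_le_iff_le_mul hc' (EReal.coe_ne_top c)]
  exact sInf_le ⟨_, hZ.const_mul hc.le, fun ω => by rw [Z_zero],
    fun t ω => mul_le_mul_of_nonneg_left (Z_ge t ω) hc'.le⟩

lemma IsTradeable.upperExp_le_upperExp {U : ℝ≥0 → Ω → ℝ} {τ : ℕ → Ω → ℝ≥0∞} {g : ℕ → Ω → ℝ}
    {E : Set (ℝ≥0 × Ω)} (hA : AssumptionA M) (hU : IsTradeable M U) (hg : IsStrategy M τ g)
    (hE : InstantlyEnforceable M E) (hΦ : ∀ t ω, (t, ω) ∈ E → 0 ≤ Φ t ω)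
    (hle : ∀ t ω, (t, ω) ∈ E → Φ t ω ≤ withGains Ψ τ g U t ω) :
    upperExp M Φ ≤ upperExp M Ψ := by
  refine le_sInf ?_
  rintro x ⟨Z, hZ, Z_zero, Z_ge⟩
  have Φ_le t ω (htω : (t, ω) ∈ E) : Φ t ω ≤ withGains Z τ g U t ω :=
    (hle t ω htω).trans (add_le_add (Z_ge t ω) le_rfl)
  refine le_of_forall_pos_le_add_coe fun ε hε => ?_
  have gains_superhedgeable := hU.superhedgeable hA hg hZ hE
    (fun t ω htω => (hΦ t ω htω).trans (Φ_le t ω htω)) (half_pos hε)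
  have Φ_superhedgeable := Superhedgeable.liminf hE (fun _ => gains_superhedgeable)
    (fun t ω htω => Eventually.of_forall fun _ => Φ_le t ω htω) (half_pos hε)
  simp only [Z_zero, add_assoc, ← EReal.coe_add, add_halves] at Φ_superhedgeable
  exact upperExp_le_of_superhedgeable Φ_superhedgeable

end UpperExpectation

/-! ### Martingales -/

section Martingales

/-- The process `X` with its infinite values replaced by `0`; for a martingale `X` this changes
nothing w.i.e. -/
def realPart (X : ℝ≥0 → Ω → EReal) (t : ℝ≥0) (ω : Ω) : ℝ := (X t ω).toReal

/-- On `E`, the paths of `X` are real and continuous up to the current time. -/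
structure IsRegularOn (X : ℝ≥0 → Ω → EReal) (E : Set (ℝ≥0 × Ω)) : Prop where
  eq_realPart : ∀ ⦃t ω⦄, (t, ω) ∈ E → ∀ s ≤ t, X s ω = realPart X s ω
  continuous : HasContinuousPathsOn (realPart X) E

variable {X : ℝ≥0 → Ω → EReal} {Xs : ℕ → ℝ≥0 → Ω → EReal} {E : Set (ℝ≥0 × Ω)}

lemma tendstoUniformlyOn_realPart {t : ℝ≥0} {ω : Ω} (hX : ∀ s ≤ t, X s ω = realPart X s ω)
    (hXs : ∀ n, ∀ s ≤ t, Xs n s ω = realPart (Xs n) s ω) (h : (t, ω) ∈ unifConvSet Xs X) :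
    TendstoUniformlyOn (fun n s => realPart (Xs n) s ω) (fun s => realPart X s ω) atTop
      (Icc 0 t) := by
  refine Metric.tendstoUniformlyOn_iff.2 fun ε hε => ?_
  filter_upwards [Tendsto.eventually_lt_const (ENNReal.ofReal_pos.2 hε) h] with n hn s hs
  have abs_lt :=
    (le_iSup₂ (f := fun s (_ : s ∈ Icc 0 t) => (X s ω - Xs n s ω).abs) s hs).trans_lt hn
  rwa [hX s hs.2, hXs n s hs.2, ← EReal.coe_sub, EReal.abs_def,
    ENNReal.ofReal_lt_ofReal_iff hε] at abs_lt

lemma isRegularOn_lim (hXs : ∀ n, IsRegularOn (Xs n) E) :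
    IsRegularOn X
      (E ∩ (hull {p : ℝ≥0 × Ω | ∃ r : ℝ, X p.1 p.2 = (r : EReal)} ∩ unifConvSet Xs X)) := by
  have real {t ω} (h : (t, ω) ∈ hull {p : ℝ≥0 × Ω | ∃ r : ℝ, X p.1 p.2 = (r : EReal)}) s
      (hs : s ≤ t) : X s ω = realPart X s ω := by
    obtain ⟨r, hr : X s ω = r⟩ := h s hs
    rw [realPart, hr, EReal.toReal_coe]
  refine ⟨fun t ω htω => real htω.2.1, fun t ω htω => ?_⟩
  exact (tendstoUniformlyOn_realPart (real htω.2.1) (fun n => (hXs n).eq_realPart htω.1)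
    htω.2.2).continuousOn (Frequently.of_forall fun n => (hXs n).continuous htω.1)

lemma IsMartingale.exists_isRegularOn (hd : 0 < M.d) (hA : AssumptionA M) (hX : IsMartingale M X) :
    ∃ E, InstantlyEnforceable M E ∧ IsRegularOn X E := by
  induction hX with
  | simple X hX =>
    exact ⟨univ, instantlyEnforceable_univ hd, fun _ _ _ _ _ => rfl,
      fun t ω _ => hX.continuousOn t ω⟩
  | lim Xs X _ _ hreal hconv ih =>
    choose E hE Xs_regular using ih
    exact ⟨_, (InstantlyEnforceable.iInter hE).inter
      ((hA.instantlyEnforceable_hull hreal).inter hconv), isRegularOn_lim fun n =>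
        ⟨fun t ω htω => (Xs_regular n).eq_realPart (mem_iInter.1 htω n),
          fun t ω htω => (Xs_regular n).continuous (mem_iInter.1 htω n)⟩⟩

lemma IsMartingale.measurable_realPart (hd : 0 < M.d) (hA : AssumptionA M) (hX : IsMartingale M X)
    (t : ℝ≥0) : Measurable[M.F t] (realPart X t) := by
  cases hX with
  | simple X hX => exact hX.measurable hd hA t
  | lim _ _ _ hadapted =>
    let := M.F t
    exact (hadapted t).ereal_toReal

lemma IsMartingale.isTradeable (hd : 0 < M.d) (hA : AssumptionA M) (hX : IsMartingale M X) :
    IsTradeable M (realPart X) := by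
  induction hX with
  | simple X hX => exact hX.isTradeable
  | lim Xs X hXs hadapted hreal hconv ih =>
    have hX : IsMartingale M X := .lim Xs X hXs hadapted hreal hconv
    obtain ⟨E, hE, X_regular⟩ := hX.exists_isRegularOn hd hA
    choose Es hEs Xs_regular using fun n => (hXs n).exists_isRegularOn hd hA
    have mem_Es {t ω} (h : (t, ω) ∈ (⋂ n, Es n) ∩ (E ∩ unifConvSet Xs X)) n : (t, ω) ∈ Es n :=
      mem_iInter.1 h.1 n
    exact .of_tendstoUniformlyOn hd hA ih
      ((InstantlyEnforceable.iInter hEs).inter (hE.inter hconv))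
      (fun n => (hXs n).measurable_realPart hd hA) (hX.measurable_realPart hd hA)
      (fun n _ _ h => (Xs_regular n).continuous (mem_Es h n))
      (fun _ _ h => X_regular.continuous h.2.1) fun _ _ h =>
        tendstoUniformlyOn_realPart (X_regular.eq_realPart h.2.1)
          (fun n => (Xs_regular n).eq_realPart (mem_Es h n)) h.2.2

end Martingales

/-! ### Hedging along a sampled path -/

section SampledHedging

/-- A rule choosing a position from the values observed so far. -/
structure IsNonanticipating (G : ℕ → (ℕ → ℝ) → ℝ) : Prop where
  measurable : ∀ n, Measurable (G n)
  congr : ∀ ⦃n x z⦄, (∀ k ≤ n, x k = z k) → G n x = G n z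

lemma measurable_runningMax (n : ℕ) : Measurable fun x : ℕ → ℝ => runningMax x n := by
  induction n with
  | zero => simpa only [runningMax_zero] using (measurable_pi_apply 0).abs
  | succ n ih => simpa only [runningMax_succ] using ih.max (measurable_pi_apply (n + 1)).abs

lemma measurable_rootSqVar (n : ℕ) : Measurable fun x : ℕ → ℝ => rootSqVar x n := by
  unfold rootSqVar
  fun_prop

lemma runningMax_congr {x z : ℕ → ℝ} {n : ℕ} (h : ∀ k ≤ n, x k = z k) :
    runningMax x n = runningMax z n := by
  induction n with
  | zero => simp only [runningMax_zero, h 0 le_rfl]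
  | succ n ih => rw [runningMax_succ, runningMax_succ, ih fun k hk => h k (hk.trans n.le_succ),
      h (n + 1) le_rfl]

lemma rootSqVar_congr {x z : ℕ → ℝ} {n : ℕ} (h : ∀ k ≤ n, x k = z k) :
    rootSqVar x n = rootSqVar z n := by
  refine congrArg Real.sqrt (Finset.sum_congr rfl fun k hk => ?_)
  rw [h (k + 1) (Finset.mem_range.1 hk), h k (Finset.mem_range.1 hk).le]

lemma isNonanticipating_maxHedge (p : ℝ) : IsNonanticipating fun n x =>
    p ^ 2 * runningMax x n ^ (p - 1) * maxHedge (x n) (rootSqVar x n) (runningMax x n) where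
  measurable n := by
    have measurable_max := measurable_runningMax n
    have measurable_root := measurable_rootSqVar n
    have measurable_sign : Measurable fun x : ℕ → ℝ => if 0 ≤ x n then (1 : ℝ) else -1 :=
      .ite (measurableSet_le measurable_const (measurable_pi_apply n)) measurable_const
        measurable_const
    unfold maxHedge davisExcess
    fun_prop
  congr n x z h := by rw [runningMax_congr h, rootSqVar_congr h, h n le_rfl]

lemma isNonanticipating_sqVarHedge (p : ℝ) : IsNonanticipating fun n x =>
    p ^ 2 * rootSqVar x n ^ (p - 1) * sqVarHedge (x n) (rootSqVar x n) (runningMax x n) where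
  measurable n := by
    have measurable_max := measurable_runningMax n
    have measurable_root := measurable_rootSqVar n
    unfold sqVarHedge
    fun_prop
  congr n x z h := by rw [runningMax_congr h, rootSqVar_congr h, h n le_rfl]

/-- The increments from time `0` of `U`, observed at the times `τ n ∧ t`. -/
def sampledPath (τ : ℕ → Ω → ℝ≥0∞) (U : ℝ≥0 → Ω → ℝ) (t : ℝ≥0) (ω : Ω) (n : ℕ) : ℝ :=
  U (capTime (τ n ω) t) ω - U 0 ω

/-- The positions prescribed by the rule `G` when it observes `U` along `τ`. -/
def hedgePosition (G : ℕ → (ℕ → ℝ) → ℝ) (τ : ℕ → Ω → ℝ≥0∞) (U : ℝ≥0 → Ω → ℝ) (n : ℕ) : Ω → ℝ :=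
  {ω | τ n ω ≠ ⊤}.indicator fun ω => G n (sampledPath τ U (τ n ω).toNNReal ω)

variable {G : ℕ → (ℕ → ℝ) → ℝ} {T : ProperSeq M} {U : ℝ≥0 → Ω → ℝ} {t : ℝ≥0} {ω : Ω}

lemma IsNonanticipating.hedgePosition_eq (hG : IsNonanticipating G) (T : ProperSeq M)
    (U : ℝ≥0 → Ω → ℝ) {n : ℕ} (hn : T.τ n ω ≤ t) :
    hedgePosition G T.τ U n ω = G n (sampledPath T.τ U t ω) := by
  have toNNReal_eq : (T.τ n ω).toNNReal = capTime (T.τ n ω) t := by rw [capTime, min_eq_left hn]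
  rw [hedgePosition, indicator_of_mem (by exact ne_top_of_le_ne_top ENNReal.coe_ne_top hn),
    toNNReal_eq]
  refine hG.congr fun k hk => ?_
  rw [sampledPath, capTime_capTime, min_eq_left (T.mono ω hk), sampledPath]

lemma IsNonanticipating.measStopped_hedgePosition (hG : IsNonanticipating G) (hA : AssumptionA M)
    {E : Set (ℝ≥0 × Ω)} (hE : InstantlyEnforceable M E) (hU : ∀ t, Measurable[M.F t] (U t))
    (hc : HasContinuousPathsOn U E) (T : ProperSeq M) (n : ℕ) :
    M.MeasStopped (T.τ n) (hedgePosition G T.τ U n) := by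
  refine (isKnownAt_iff (T.stopping n)).1 fun t => ?_
  have indicator_eq : {ω | T.τ n ω ≤ t}.indicator (hedgePosition G T.τ U n) =
      {ω | T.τ n ω ≤ t}.indicator fun ω => G n (sampledPath T.τ U t ω) :=
    indicator_congr fun ω hω => hG.hedgePosition_eq T U hω
  rw [indicator_eq]
  have samples_measurable (k : ℕ) : Measurable[M.F t] fun ω => sampledPath T.τ U t ω k := by
    let := M.F t
    exact (hA.measurable_stopped hE hU hc (T.stopping k) t).sub
      ((hU 0).mono (M.mono zero_le) le_rfl)
  have time_measurable := T.stopping n t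
  let := M.F t
  exact ((hG.measurable n).comp (measurable_pi_lambda _ samples_measurable)).indicator
    time_measurable

/-- From its `N`-th entry on, the sequence `τ` capped at `t` does not move along `ω`. -/
def IsSettledAt (τ : ℕ → Ω → ℝ≥0∞) (t : ℝ≥0) (ω : Ω) (N : ℕ) : Prop :=
  ∀ n, N ≤ n → capTime (τ n ω) t = capTime (τ N ω) t

lemma ProperSeq.exists_isSettledAt (T : ProperSeq M) (t : ℝ≥0) (ω : Ω) :
    ∃ N, IsSettledAt T.τ t ω N := by
  rcases T.proper ω with htendsto | ⟨N, hN⟩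
  · obtain ⟨N, hN⟩ := eventually_atTop.1
      (htendsto.eventually (eventually_ge_nhds (ENNReal.coe_lt_top (r := t))))
    exact ⟨N, fun n hn => by rw [capTime_eq_right (hN n hn), capTime_eq_right (hN N le_rfl)]⟩
  · exact ⟨N, fun n hn => by rw [hN n hn]⟩

lemma IsSettledAt.sampledPath_eq {τ : ℕ → Ω → ℝ≥0∞} {N : ℕ} (hN : IsSettledAt τ t ω N)
    (U : ℝ≥0 → Ω → ℝ) {n : ℕ} (hn : N ≤ n) : sampledPath τ U t ω n = sampledPath τ U t ω N := by
  rw [sampledPath, hN n hn, sampledPath]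

lemma IsNonanticipating.gridIntegral_hedgePosition (hG : IsNonanticipating G) (U : ℝ≥0 → Ω → ℝ)
    {N : ℕ} (hN : IsSettledAt T.τ t ω N) :
    gridIntegral T.τ (hedgePosition G T.τ U) U t ω =
      ∑ n ∈ Finset.range N, G n (sampledPath T.τ U t ω) *
        (sampledPath T.τ U t ω (n + 1) - sampledPath T.τ U t ω n) := by
  rw [gridIntegral, tsum_eq_sum (s := Finset.range N) fun n hn => ?_]
  · refine Finset.sum_congr rfl fun n _ => ?_
    rw [sampledPath, sampledPath, sub_sub_sub_cancel_right]
    rcases le_total (T.τ n ω) t with hn | hn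
    · rw [hG.hedgePosition_eq T U hn]
    · rw [capTime_eq_right hn, capTime_eq_right (hn.trans (T.mono ω n.le_succ)), sub_self,
        mul_zero, mul_zero]
  · rw [Finset.mem_range, not_lt] at hn
    rw [hN n hn, hN (n + 1) (hn.trans n.le_succ), sub_self, mul_zero]

/-- Wherever `X` is real, the process `Φ` is the functional `φ` of `X` sampled along `τ`; here
`φ z N` only has to be right once `z` is constant from `N` on. -/
def IsSampledFunctional (X : ℝ≥0 → Ω → EReal) (τ : ℕ → Ω → ℝ≥0∞) (Φ : ℝ≥0 → Ω → EReal)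
    (φ : (ℕ → ℝ) → ℕ → ℝ) : Prop :=
  ∀ ⦃t ω N⦄, (∀ s ≤ t, X s ω = realPart X s ω) → IsSettledAt τ t ω N →
    Φ t ω = φ (sampledPath τ (realPart X) t ω) N

lemma IsMartingale.upperExp_le_mul_of_pathwise {X : ℝ≥0 → Ω → EReal} (hd : 0 < M.d)
    (hA : AssumptionA M) (hX : IsMartingale M X) (hG : IsNonanticipating G)
    {Φ Ψ : ℝ≥0 → Ω → EReal} {φ ψ : (ℕ → ℝ) → ℕ → ℝ} (hΦ : IsSampledFunctional X T.τ Φ φ)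
    (hΨ : IsSampledFunctional X T.τ Ψ ψ) (hφ : ∀ z N, 0 ≤ φ z N) {C : ℝ} (hC : 0 < C)
    (hle : ∀ z : ℕ → ℝ, z 0 = 0 → ∀ N,
      φ z N ≤ C * ψ z N + ∑ n ∈ Finset.range N, G n z * (z (n + 1) - z n)) :
    upperExp M Φ ≤ C * upperExp M Ψ := by
  obtain ⟨E, hE, X_regular⟩ := hX.exists_isRegularOn hd hA
  have position_known := hG.measStopped_hedgePosition hA hE (hX.measurable_realPart hd hA)
    X_regular.continuous T
  refine le_trans ((hX.isTradeable hd hA).upperExp_le_upperExp (Φ := Φ) hA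
    (T.isStrategy_toGrid position_known fun n ω hω => ?_) hE (fun t ω htω => ?_)
    fun t ω htω => ?_) (upperExp_const_mul_le hC Ψ)
  · exact indicator_of_notMem (s := {ω | T.τ n ω ≠ ⊤}) (fun hne => hne hω) _
  all_goals
    obtain ⟨N, hN⟩ := T.exists_isSettledAt t ω
    have X_real := X_regular.eq_realPart htω
  · rw [hΦ X_real hN]
    exact EReal.coe_nonneg.2 (hφ _ _)
  · rw [withGains, T.gridIntegral_toGrid, hG.gridIntegral_hedgePosition _ hN, hΦ X_real hN,
      hΨ X_real hN, ← EReal.coe_mul, ← EReal.coe_add]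
    refine EReal.coe_le_coe_iff.2 (hle _ ?_ N)
    rw [sampledPath, T.zero, zero_capTime, sub_self]

end SampledHedging

/-! ### The Burkholder–Davis–Gundy inequalities -/

section BurkholderDavisGundy

/-- The process `([X]^τ)^{p/2}`. -/
def sqVarPower (X : ℝ≥0 → Ω → EReal) (τ : ℕ → Ω → ℝ≥0∞) (p : ℝ) (t : ℝ≥0) (ω : Ω) : EReal :=
  ((sqVarAlong X τ t ω ^ (p / 2) : ℝ≥0∞) : EReal)

/-- The process `((X - X₀)^{τ,*})^p`. -/
def maxPower (X : ℝ≥0 → Ω → EReal) (τ : ℕ → Ω → ℝ≥0∞) (p : ℝ) (t : ℝ≥0) (ω : Ω) : EReal :=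
  ((supAlong (fun s ω' => X s ω' - X 0 ω') τ t ω ^ p : ℝ≥0∞) : EReal)

lemma iSup_ofReal_abs_eq_runningMax {z : ℕ → ℝ} {N : ℕ} (hz : ∀ n, N ≤ n → z n = z N) :
    ⨆ n, ENNReal.ofReal |z n| = ENNReal.ofReal (runningMax z N) := by
  refine le_antisymm (iSup_le fun n => ENNReal.ofReal_le_ofReal ?_) ?_
  · rcases le_total n N with hn | hn
    · exact (abs_le_runningMax z n).trans (runningMax_mono z hn)
    · exact hz n hn ▸ abs_le_runningMax z N
  · obtain ⟨k, -, hk⟩ := exists_partialSups_eq (fun k => |z k|) N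
    rw [runningMax, hk]
    exact le_iSup (fun n => ENNReal.ofReal |z n|) k

lemma tsum_ofReal_sq_sub_eq_rootSqVar {z : ℕ → ℝ} {N : ℕ} (hz : ∀ n, N ≤ n → z n = z N) :
    ∑' n, ENNReal.ofReal ((z (n + 1) - z n) ^ 2) = ENNReal.ofReal (rootSqVar z N ^ 2) := by
  rw [tsum_eq_sum (s := Finset.range N) fun n hn => ?_, sq_rootSqVar,
    ENNReal.ofReal_sum_of_nonneg fun _ _ => sq_nonneg _]
  rw [Finset.mem_range, not_lt] at hn
  rw [hz n hn, hz (n + 1) (hn.trans n.le_succ), sub_self, sq, mul_zero, ENNReal.ofReal_zero]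

variable {X : ℝ≥0 → Ω → EReal} {p C : ℝ}

lemma isSampledFunctional_maxPower (X : ℝ≥0 → Ω → EReal) (τ : ℕ → Ω → ℝ≥0∞) (hp : 0 ≤ p) :
    IsSampledFunctional X τ (maxPower X τ p) fun z N => runningMax z N ^ p := by
  intro t ω N hX hN
  have abs_eq (n : ℕ) : (stopVal (fun s ω' => X s ω' - X 0 ω') (τ n) t ω).abs =
      ENNReal.ofReal |sampledPath τ (realPart X) t ω n| := by
    change (X (capTime (τ n ω) t) ω - X 0 ω).abs = _
    rw [hX _ (capTime_le _ _), hX 0 zero_le, ← EReal.coe_sub, EReal.abs_def, sampledPath]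
  have max_nonneg := runningMax_nonneg (sampledPath τ (realPart X) t ω) N
  rw [maxPower, supAlong, iSup_congr abs_eq,
    iSup_ofReal_abs_eq_runningMax fun n => hN.sampledPath_eq (realPart X),
    ENNReal.ofReal_rpow_of_nonneg max_nonneg hp, EReal.coe_ennreal_ofReal,
    max_eq_left (Real.rpow_nonneg max_nonneg p)]

lemma isSampledFunctional_sqVarPower (X : ℝ≥0 → Ω → EReal) (τ : ℕ → Ω → ℝ≥0∞) (hp : 0 ≤ p) :
    IsSampledFunctional X τ (sqVarPower X τ p) fun z N => rootSqVar z N ^ p := by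
  intro t ω N hX hN
  have sq_eq (n : ℕ) : ((stopVal X (τ (n + 1)) t ω - stopVal X (τ n) t ω) ^ 2).abs =
      ENNReal.ofReal ((sampledPath τ (realPart X) t ω (n + 1) -
        sampledPath τ (realPart X) t ω n) ^ 2) := by
    change ((X (capTime (τ (n + 1) ω) t) ω - X (capTime (τ n ω) t) ω) ^ 2).abs = _
    rw [hX _ (capTime_le _ _), hX _ (capTime_le _ _), ← EReal.coe_sub, ← EReal.coe_pow,
      EReal.abs_def, abs_sq, sampledPath, sampledPath, sub_sub_sub_cancel_right]
  have root_nonneg := rootSqVar_nonneg (sampledPath τ (realPart X) t ω) N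
  rw [sqVarPower, sqVarAlong, tsum_congr sq_eq,
    tsum_ofReal_sq_sub_eq_rootSqVar fun n => hN.sampledPath_eq (realPart X),
    ENNReal.ofReal_rpow_of_nonneg (sq_nonneg _) (by positivity), EReal.coe_ennreal_ofReal,
    max_eq_left (by positivity), ← Real.rpow_two, ← Real.rpow_mul root_nonneg,
    mul_div_cancel₀ p two_ne_zero]

lemma IsSimpleCapital.eq_zero_of_d_eq_zero (hd : M.d = 0) {Y : ℝ≥0 → Ω → ℝ}
    (hY : IsSimpleCapital M Y) (t : ℝ≥0) (ω : Ω) : Y t ω = 0 := by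
  obtain ⟨G, hG⟩ := hY
  have : IsEmpty (Fin M.d) := hd ▸ Fin.isEmpty'
  rw [hG, Finset.univ_eq_empty, Finset.sum_empty]

lemma IsNonnegSupermart.eq_zero_of_d_eq_zero (hd : M.d = 0) {Z : ℝ≥0 → Ω → EReal}
    (hZ : IsNonnegSupermart M Z) (t : ℝ≥0) (ω : Ω) : Z t ω = 0 := by
  induction hZ generalizing t ω with
  | simple X hX _ => simp only [hX.eq_zero_of_d_eq_zero hd, EReal.coe_zero]
  | add X Y _ hY _ ih => simp only [hY.eq_zero_of_d_eq_zero hd, ih, EReal.coe_zero, add_zero]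
  | liminf Xs _ ih => simp only [ih, liminf_const]

lemma IsMartingale.eq_zero_of_d_eq_zero (hd : M.d = 0) (hX : IsMartingale M X) (t : ℝ≥0) (ω : Ω) :
    X t ω = 0 := by
  cases hX with
  | simple X hX => exact congrArg _ (hX.eq_zero_of_d_eq_zero hd t ω)
  | lim _ _ _ _ _ hconv =>
    obtain ⟨V, hV, V_zero, -⟩ := hconv
    exact absurd ((hV.eq_zero_of_d_eq_zero hd 0 ω).symm.trans (V_zero ω)) zero_ne_one

lemma upperExp_zero_le_mul (hC : 0 < C) :
    upperExp M (fun _ _ => 0) ≤ C * upperExp M fun _ _ => 0 := by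
  simpa only [mul_zero] using upperExp_const_mul_le (M := M) hC fun _ _ => 0

lemma maxPower_eq_zero (hX : ∀ t ω, X t ω = 0) (τ : ℕ → Ω → ℝ≥0∞) (hp : 0 < p) :
    maxPower X τ p = fun _ _ => 0 := by
  ext t ω
  simp [maxPower, supAlong, stopVal, hX, hp]

lemma sqVarPower_eq_zero (hX : ∀ t ω, X t ω = 0) (τ : ℕ → Ω → ℝ≥0∞) (hp : 0 < p) :
    sqVarPower X τ p = fun _ _ => 0 := by
  ext t ω
  simp [sqVarPower, sqVarAlong, stopVal, hX, hp]

lemma IsMartingale.upperExp_maxPower_le (hA : AssumptionA M) (hX : IsMartingale M X)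
    (T : ProperSeq M) (hp : 1 ≤ p) (hC : (3 * p) ^ p ≤ C) :
    upperExp M (maxPower X T.τ p) ≤ C * upperExp M (sqVarPower X T.τ p) := by
  have p_pos : 0 < p := one_pos.trans_le hp
  have C_pos : 0 < C := lt_of_lt_of_le (by positivity) hC
  rcases Nat.eq_zero_or_pos M.d with hd | hd
  · have X_zero := hX.eq_zero_of_d_eq_zero hd
    rw [maxPower_eq_zero X_zero T.τ p_pos, sqVarPower_eq_zero X_zero T.τ p_pos]
    exact upperExp_zero_le_mul C_pos
  · refine hX.upperExp_le_mul_of_pathwise hd hA (isNonanticipating_maxHedge p)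
      (isSampledFunctional_maxPower X T.τ p_pos.le) (isSampledFunctional_sqVarPower X T.τ p_pos.le)
      (fun z N => Real.rpow_nonneg (runningMax_nonneg z N) p) C_pos fun z hz N => ?_
    have root_nonneg := rootSqVar_nonneg z N
    exact (runningMax_rpow_le hp hz N).trans (by gcongr)

lemma IsMartingale.upperExp_sqVarPower_le (hA : AssumptionA M) (hX : IsMartingale M X)
    (T : ProperSeq M) (hp : 1 ≤ p) (hC : (3 * p) ^ p ≤ C) :
    upperExp M (sqVarPower X T.τ p) ≤ C * upperExp M (maxPower X T.τ p) := by
  have p_pos : 0 < p := one_pos.trans_le hp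
  have C_pos : 0 < C := lt_of_lt_of_le (by positivity) hC
  rcases Nat.eq_zero_or_pos M.d with hd | hd
  · have X_zero := hX.eq_zero_of_d_eq_zero hd
    rw [maxPower_eq_zero X_zero T.τ p_pos, sqVarPower_eq_zero X_zero T.τ p_pos]
    exact upperExp_zero_le_mul C_pos
  · refine hX.upperExp_le_mul_of_pathwise hd hA (isNonanticipating_sqVarHedge p)
      (isSampledFunctional_sqVarPower X T.τ p_pos.le) (isSampledFunctional_maxPower X T.τ p_pos.le)
      (fun z N => Real.rpow_nonneg (rootSqVar_nonneg z N) p) C_pos fun z hz N => ?_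
    have max_nonneg := runningMax_nonneg z N
    exact (rootSqVar_rpow_le hp hz N).trans (by gcongr)

lemma one_div_mul_le_of_le_mul {q m : EReal} (hC : 0 < C) (h : q ≤ C * m) :
    ((1 / C : ℝ) : EReal) * q ≤ m := by
  rwa [one_div, EReal.coe_inv, ← EReal.div_eq_inv_mul,
    EReal.div_le_iff_le_mul (EReal.coe_pos.2 hC) (EReal.coe_ne_top C)]

end BurkholderDavisGundy

/-- BDG inequalities for the simple quadratic variation, with the explicit
constants `C_p = 6^p (p−1)^{p−1}`, `c_p = 1/C_p` for `p > 1`, and `C_1 = 6`, `c_1 = 1/3`. -/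
theorem bdg_simple (M : MartingaleSpace Ω) (hA : AssumptionA M)
    (X : ℝ≥0 → Ω → EReal) (hX : IsMartingale M X) (τ : ProperSeq M)
    (p : ℝ) (hp : 1 ≤ p) :
    ∃ c C : ℝ, 0 < c ∧ 0 < C ∧
      ((c : EReal) *
          upperExp M (fun t ω => ((sqVarAlong X τ.τ t ω ^ (p / 2) : ℝ≥0∞) : EReal)) ≤
        upperExp M (fun t ω =>
          ((supAlong (fun s ω' => X s ω' - X 0 ω') τ.τ t ω ^ p : ℝ≥0∞) : EReal))) ∧
      (upperExp M (fun t ω =>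
          ((supAlong (fun s ω' => X s ω' - X 0 ω') τ.τ t ω ^ p : ℝ≥0∞) : EReal)) ≤
        (C : EReal) *
          upperExp M (fun t ω => ((sqVarAlong X τ.τ t ω ^ (p / 2) : ℝ≥0∞) : EReal))) ∧
      (1 < p → C = 6 ^ p * (p - 1) ^ (p - 1) ∧ c = 1 / C) ∧
      (p = 1 → C = 6 ∧ c = 1 / 3) := by
  have max_le {C : ℝ} (hC : (3 * p) ^ p ≤ C) := hX.upperExp_maxPower_le hA τ hp hC
  have sqVar_le {C : ℝ} (hC : (3 * p) ^ p ≤ C) := hX.upperExp_sqVarPower_le hA τ hp hC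
  rcases hp.lt_or_eq with one_lt | rfl
  · have C_pos : 0 < 6 ^ p * (p - 1) ^ (p - 1) := by
      have := sub_pos.2 one_lt
      positivity
    have le_C := three_mul_rpow_le one_lt
    exact ⟨_, _, one_div_pos.2 C_pos, C_pos, one_div_mul_le_of_le_mul C_pos (sqVar_le le_C),
      max_le le_C, fun _ => ⟨rfl, rfl⟩, fun h => absurd h one_lt.ne'⟩
  · have three_le : ((3 : ℝ) * 1) ^ (1 : ℝ) ≤ 3 := by norm_num
    exact ⟨1 / 3, 6, by norm_num, by norm_num,
      one_div_mul_le_of_le_mul three_pos (sqVar_le three_le), max_le (three_le.trans (by norm_num)),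
      fun h => absurd h (lt_irrefl _), fun _ => ⟨rfl, rfl⟩⟩

end ModelFreeBDG
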